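/- In the tower construction with D := ⋃_{n≥1} Dₙ and 𝓜 := ⋃_{n≥2} 𝓜ₙ, one has D = ⋂ { D_q : q ∈ Spec(D), q ≠ 𝓜 }, the intersection taken inside the quotient field K of D; consequently D is an essential domain (each such D_q being a valuation domain), while its localization D_𝓜 = A is not essential, and dim(D) = dim_v(D) = r. -/

import Mathlib

/- Preamble: the tower construction of Fontana–Kabbaj (Example 3.1).
All rings are realized as subsets/subrings of one ambient field `Amb k0 r`:
the rational function field over `k0` in the indeterminates
`X₁, X₂, …` (indexed by `ℕ`), `Y`, and `Z₁, …, Z_{r-1}`. -/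

noncomputable section

open Polynomial

/-- Index type for the indeterminates: `Sum.inl n` is `Xₙ`, `Sum.inr (Sum.inl ())` is `Y`,
and `Sum.inr (Sum.inr i)` is `Z_{i+1}`. -/
abbrev TowerVars (r : ℕ) : Type := ℕ ⊕ (Unit ⊕ Fin (r - 1))

/-- The ambient field: the fraction field of the polynomial ring over `k0` in all the
indeterminates. -/
abbrev Amb (k0 : Type) [Field k0] (r : ℕ) : Type :=
  FractionRing (MvPolynomial (TowerVars r) k0)

variable (k0 : Type) [Field k0] (r : ℕ)

/-- The indeterminate `Xₙ` as an element of the ambient field. -/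
def ambX (n : ℕ) : Amb k0 r :=
  algebraMap (MvPolynomial (TowerVars r) k0) (Amb k0 r) (MvPolynomial.X (Sum.inl n))

/-- The indeterminate `Y` as an element of the ambient field. -/
def ambY : Amb k0 r :=
  algebraMap (MvPolynomial (TowerVars r) k0) (Amb k0 r) (MvPolynomial.X (Sum.inr (Sum.inl ())))

/-- The indeterminates `Z₁, …, Z_{r-1}` as elements of the ambient field. -/
def ambZ (i : Fin (r - 1)) : Amb k0 r :=
  algebraMap (MvPolynomial (TowerVars r) k0) (Amb k0 r) (MvPolynomial.X (Sum.inr (Sum.inr i)))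

/-- The image of the base field `k0` in the ambient field. -/
def baseSet : Set (Amb k0 r) :=
  Set.range fun c : k0 => algebraMap (MvPolynomial (TowerVars r) k0) (Amb k0 r) (MvPolynomial.C c)

/-- `kₙ := k0(X₁, …, Xₙ)` as a subfield of the ambient field. -/
def kfld (n : ℕ) : Subfield (Amb k0 r) :=
  Subfield.closure (baseSet k0 r ∪ {x | ∃ i, 1 ≤ i ∧ i ≤ n ∧ x = ambX k0 r i})

/-- `Fₙ := kₙ(Z₁, …, Z_{r-1})`. -/
def Ffld (n : ℕ) : Subfield (Amb k0 r) :=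
  Subfield.closure (↑(kfld k0 r n) ∪ Set.range (ambZ k0 r))

/-- `Kₙ := Fₙ(Y)`. -/
def Kfld (n : ℕ) : Subfield (Amb k0 r) :=
  Subfield.closure (↑(Ffld k0 r n) ∪ {ambY k0 r})

/-- The polynomial ring `Fₙ[Y]` as a subring of the ambient field. -/
def polyRing (n : ℕ) : Subring (Amb k0 r) :=
  Subring.closure (↑(Ffld k0 r n) ∪ {ambY k0 r})

/-- `Vₙ := Fₙ[Y]_{(Y)}`, the localization of `Fₙ[Y]` at the prime `(Y)`, as a subset of
the ambient field. -/
def Vset (n : ℕ) : Set (Amb k0 r) :=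
  {x | ∃ f ∈ polyRing k0 r n, ∃ g ∈ polyRing k0 r n,
    (¬ ∃ h ∈ polyRing k0 r n, g = ambY k0 r * h) ∧ x = f / g}

/-- `Mₙ := Y·Fₙ[Y]_{(Y)}`, the maximal ideal of `Vₙ`. -/
def Mset (n : ℕ) : Set (Amb k0 r) :=
  {x | ∃ v ∈ Vset k0 r n, x = ambY k0 r * v}

/-- `Aₙ := kₙ + Mₙ`. -/
def Aset (n : ℕ) : Set (Amb k0 r) :=
  {x | ∃ c ∈ kfld k0 r n, ∃ m ∈ Mset k0 r n, x = c + m}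

/-- `k := ⋃ₙ kₙ` as a subset of the ambient field. -/
def kfldU : Set (Amb k0 r) := ⋃ n, (kfld k0 r n : Set (Amb k0 r))

/-- `F := k(Z₁, …, Z_{r-1}) = ⋃ₙ Fₙ`. -/
def FfldU : Subfield (Amb k0 r) :=
  Subfield.closure (kfldU k0 r ∪ Set.range (ambZ k0 r))

/-- `K := F(Y) = ⋃ₙ Kₙ`. -/
def KfldU : Subfield (Amb k0 r) :=
  Subfield.closure (↑(FfldU k0 r) ∪ {ambY k0 r})

/-- The polynomial ring `F[Y]`. -/
def polyRingU : Subring (Amb k0 r) :=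
  Subring.closure (↑(FfldU k0 r) ∪ {ambY k0 r})

/-- `V := F[Y]_{(Y)}`. -/
def VsetU : Set (Amb k0 r) :=
  {x | ∃ f ∈ polyRingU k0 r, ∃ g ∈ polyRingU k0 r,
    (¬ ∃ h ∈ polyRingU k0 r, g = ambY k0 r * h) ∧ x = f / g}

/-- `M := Y·F[Y]_{(Y)} = ⋃ₙ Mₙ`. -/
def MsetU : Set (Amb k0 r) :=
  {x | ∃ v ∈ VsetU k0 r, x = ambY k0 r * v}

/-- `A := k + M = ⋃ₙ Aₙ`. -/
def AsetU : Set (Amb k0 r) :=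
  {x | ∃ c ∈ kfldU k0 r, ∃ m ∈ MsetU k0 r, x = c + m}

/-- `X′ₙ := (1 + Y·Xₙ)/Y`. -/
def ambX' (n : ℕ) : Amb k0 r :=
  (1 + ambY k0 r * ambX k0 r n) / ambY k0 r

/-- `1` belongs to the ideal of `W` generated by the coefficients of `g`, where `W` is a
subring (given as a subset `S`) of the ambient field. -/
def unitContent (S : Set (Amb k0 r)) (g : Polynomial (Amb k0 r)) : Prop :=
  ∃ (t : Finset ℕ) (u : ℕ → Amb k0 r), (∀ i ∈ t, u i ∈ S) ∧ ∑ i ∈ t, u i * g.coeff i = 1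

/-- The Nagata ring `W(T)` of a subring `W ⊆ Amb k0 r` (given as a subset `S`) in the
"variable" `T`: all fractions `f(T)/g(T)` with `f, g ∈ W[T]` and the coefficients of `g`
generating the unit ideal of `W`.  (When `T` is transcendental over `W` this is the usual
Nagata ring.) -/
def nagataSet (S : Set (Amb k0 r)) (T : Amb k0 r) : Set (Amb k0 r) :=
  {x | ∃ f g : Polynomial (Amb k0 r), (∀ i, f.coeff i ∈ S) ∧ (∀ i, g.coeff i ∈ S) ∧
    unitContent k0 r S g ∧ x = f.eval T / g.eval T}

/-- The valuation overrings of a ring `D` (given as a subset) inside a subfield `L` of the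
ambient field: subrings `W` with `D ⊆ W ⊆ L` such that for every `x ∈ L`, `x ∈ W` or
`x⁻¹ ∈ W`. -/
def valOverringsIn (D : Set (Amb k0 r)) (L : Subfield (Amb k0 r)) : Set (Subring (Amb k0 r)) :=
  {W | D ⊆ ↑W ∧ (W : Set (Amb k0 r)) ⊆ (L : Set (Amb k0 r)) ∧ ∀ x ∈ L, x ∈ W ∨ x⁻¹ ∈ W}

/-- The Kronecker function ring `Kr_{L(T)}(D, b) = ⋂ {W(T) : W a valuation overring of `D`
in `L`}`, realized as a subset of the ambient field. -/
def krSet (D : Set (Amb k0 r)) (L : Subfield (Amb k0 r)) (T : Amb k0 r) : Set (Amb k0 r) :=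
  ⋂ W ∈ valOverringsIn k0 r D L, nagataSet k0 r (↑W) T

/-- The tower `Dₙ`: `D₁ := A₁` and `Dₙ := Bₙ ∩ Aₙ` for `n ≥ 2`, where
`Bₙ := Kr_{K_{n-1}(X′ₙ)}(D_{n-1}, b)`.  (The value at `0` is junk, set to `D₁`.) -/
def Dset : ℕ → Set (Amb k0 r)
  | 0 => Aset k0 r 1
  | 1 => Aset k0 r 1
  | n + 2 => krSet k0 r (Dset (n + 1)) (Kfld k0 r (n + 1)) (ambX' k0 r (n + 2)) ∩ Aset k0 r (n + 2)

/-- `Bₙ := Kr_{K_{n-1}(X′ₙ)}(D_{n-1}, b)` (meaningful for `n ≥ 2`). -/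
def Bset (n : ℕ) : Set (Amb k0 r) :=
  krSet k0 r (Dset k0 r (n - 1)) (Kfld k0 r (n - 1)) (ambX' k0 r n)

/-- `𝓜ₙ := Mₙ ∩ Dₙ`. -/
def MMset (n : ℕ) : Set (Amb k0 r) := Mset k0 r n ∩ Dset k0 r n

/-- `D := ⋃__{n ≥ 1} Dₙ`. -/
def DsetU : Set (Amb k0 r) := ⋃ n, Dset k0 r n

/-- `𝓜 := ⋃_{n ≥ 2} 𝓜ₙ`. -/
def MMsetU : Set (Amb k0 r) := ⋃ n, MMset k0 r (n + 2)

/-- The localization `D_m = {a/b : a, b ∈ D, b ∉ m}` of a subring `D` of the ambient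
field (given as a subset) at (the complement of) a subset `m`. -/
def locAt (D m : Set (Amb k0 r)) : Set (Amb k0 r) :=
  {x | ∃ a ∈ D, ∃ b ∈ D, b ∉ m ∧ x = a / b}

/-- The quotient field, inside the ambient field, of a subring given as a subset. -/
def qfSet (D : Set (Amb k0 r)) : Set (Amb k0 r) :=
  {x | ∃ a ∈ D, ∃ b ∈ D, b ≠ 0 ∧ x = a / b}

/-- The nonunits of a subring of the ambient field, given as a subset: in a local
subring of a field these form the maximal ideal. -/
def nonunitsIn (S : Set (Amb k0 r)) : Set (Amb k0 r) :=
  {x | x ∈ S ∧ (x = 0 ∨ x⁻¹ ∉ S)}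

/-- A subring `A` of the ambient field is a pseudo-valuation domain: it is local, and its
maximal ideal (= set of nonunits) is also the maximal ideal of some valuation overring of
`A` in its quotient field. -/
def IsPVDSub (A : Subring (Amb k0 r)) : Prop :=
  IsLocalRing ↥A ∧
  ∃ W : Subring (Amb k0 r), (A : Set (Amb k0 r)) ⊆ ↑W ∧
    (W : Set (Amb k0 r)) ⊆ qfSet k0 r ↑A ∧
    (∀ x ∈ qfSet k0 r (A : Set (Amb k0 r)), x ∈ W ∨ x⁻¹ ∈ W) ∧
    nonunitsIn k0 r ↑A = nonunitsIn k0 r ↑W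

/-- The valuative dimension of a subring of the ambient field: the supremum of the Krull
dimensions of its valuation overrings (in its quotient field). -/
def subValuativeDim (A : Subring (Amb k0 r)) : WithBot ℕ∞ :=
  ⨆ W : {W : Subring (Amb k0 r) // (A : Set (Amb k0 r)) ⊆ ↑W ∧
      (W : Set (Amb k0 r)) ⊆ qfSet k0 r ↑A ∧
      ∀ x ∈ qfSet k0 r (A : Set (Amb k0 r)), x ∈ W ∨ x⁻¹ ∈ W},
    ringKrullDim ↥(W : Subring (Amb k0 r))


/-- `1` belongs to the ideal generated by the coefficients of a multivariable polynomial
`g` in the subring given by the subset `S`. -/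
def mvUnitContent (S : Set (Amb k0 r)) (g : MvPolynomial ℕ (Amb k0 r)) : Prop :=
  ∃ (t : Finset (ℕ →₀ ℕ)) (u : (ℕ →₀ ℕ) → Amb k0 r),
    (∀ m ∈ t, u m ∈ S) ∧ ∑ m ∈ t, u m * MvPolynomial.coeff m g = 1

/-- The Nagata ring `W(T₀, T₁, …)` of a subring `W` of the ambient field (given as a
subset `S`) in countably many "variables" `T j`: all fractions `f(T)/g(T)` with
`f, g ∈ W[T₀, T₁, …]` and the coefficients of `g` generating the unit ideal of `W`. -/
def nagataSetMv (S : Set (Amb k0 r)) (T : ℕ → Amb k0 r) : Set (Amb k0 r) :=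
  {x | ∃ f g : MvPolynomial ℕ (Amb k0 r),
    (∀ m, MvPolynomial.coeff m f ∈ S) ∧ (∀ m, MvPolynomial.coeff m g ∈ S) ∧
    mvUnitContent k0 r S g ∧ x = MvPolynomial.eval T f / MvPolynomial.eval T g}

/-- A subring `S` of the ambient field is an *essential* domain: `S` is the intersection
of a family of localizations `S_p` at primes `p ∈ Δ`, each of which is a valuation domain
(with quotient field the quotient field of `S`). -/
def IsEssentialSub (S : Subring (Amb k0 r)) : Prop :=
  ∃ Δ : Set (Ideal ↥S),
    (∀ p ∈ Δ, p.IsPrime) ∧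
    (∀ p ∈ Δ, ∀ x ∈ qfSet k0 r (S : Set (Amb k0 r)),
      x ∈ locAt k0 r ↑S (Subtype.val '' (p : Set ↥S)) ∨
      x⁻¹ ∈ locAt k0 r ↑S (Subtype.val '' (p : Set ↥S))) ∧
    (S : Set (Amb k0 r)) = ⋂ p ∈ Δ, locAt k0 r ↑S (Subtype.val '' (p : Set ↥S))

end

/-!
Let `v` be the `Y`-adic valuation and `tₙ = 1 / X′ₙ`, so that `v tₙ < 1`. For `x ∈ Kₙ` and `N` large
the numerator and denominator of `x` do not overlap in `1 + tₙ ^ N * x`, whose content is therefore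
the ideal generated by both; hence the Kronecker function ring `Bₙ` contains `1 / (1 + tₙ ^ N * x)`
and `x / (1 + tₙ ^ N * x)`.

* If `x ∈ A`, these two elements lie in `D` and the first is not in `𝓜`, so `D_𝓜 = A`.
* In general, multiplying them by a power of `tₙ` gives `x = a / b` with `a, b ∈ D` and
  `b + tₙ ^ N * a` a power of `tₙ`, so `D_q` is a valuation ring once `q` contains only finitely
  many `tₙ`. Any other prime contains `𝓜`, because `x² / tₙ ∈ D` for `x ∈ 𝓜`, and `𝓜` is maximal.
* If `x ∈ D_q` for all `q ≠ 𝓜`, then the ideal of the `d ∈ D` with `d * x ∈ D` lies in no prime but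
  `𝓜`, so it contains a power of `tₙ`, which is a unit of `Bₙ`; hence `x ∈ Bₙ ∩ Kₙ₋₁ = Dₙ₋₁`.
* A valuation overring of `Dₙ` contains either `Bₙ`, and then has the dimension of its restriction
  to `Kₙ₋₁`, or `kₙ`, over which `Kₙ` has transcendence degree `r`. Conversely, the iterated Gauss
  extensions of an `r`-dimensional valuation overring of `A₁` have as union a localization of `D`.
* A localization of `A` at a nonzero prime is contained in `A`, hence is not a valuation ring
  because `A` contains neither `Z₁` nor `1 / Z₁`.
-/

namespace FontanaKabbaj

open Polynomial WithZero

section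

variable {R : Type*} [Semiring R] {f : R[X]} {N : ℕ}

lemma zero_mem_range_coeff (f : R[X]) : 0 ∈ Set.range f.coeff :=
  ⟨f.natDegree + 1, coeff_eq_zero_of_natDegree_lt (by lia)⟩

lemma coeff_add_mul_X_pow (hN : f.natDegree < N) (g : R[X]) (i : ℕ) :
    (f + g * X ^ N).coeff i = if i < N then f.coeff i else g.coeff (i - N) := by
  rw [coeff_add, coeff_mul_X_pow']
  split_ifs with h₁ h₂ h₂
  · lia
  · rw [coeff_eq_zero_of_natDegree_lt (p := f) (by lia), zero_add]
  · rw [add_zero]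
  · lia

lemma range_coeff_mul_X_pow_subset (f : R[X]) (N : ℕ) :
    Set.range (f * X ^ N).coeff ⊆ Set.range f.coeff := by
  rintro _ ⟨i, rfl⟩
  rw [coeff_mul_X_pow']
  split_ifs
  exacts [Set.mem_range_self _, zero_mem_range_coeff f]

lemma range_coeff_left_subset (hN : f.natDegree < N) (g : R[X]) :
    Set.range f.coeff ⊆ Set.range (f + g * X ^ N).coeff := by
  rintro _ ⟨i, rfl⟩
  rcases lt_or_ge i N with hi | hi
  · exact ⟨i, by rw [coeff_add_mul_X_pow hN, if_pos hi]⟩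
  · rw [coeff_eq_zero_of_natDegree_lt (by lia)]
    exact zero_mem_range_coeff _

lemma range_coeff_right_subset (hN : f.natDegree < N) (g : R[X]) :
    Set.range g.coeff ⊆ Set.range (f + g * X ^ N).coeff := by
  rintro _ ⟨i, rfl⟩
  exact ⟨i + N, by rw [coeff_add_mul_X_pow hN, if_neg (by lia), Nat.add_sub_cancel]⟩

lemma add_mul_X_pow_ne_zero (hN : f.natDegree < N) {g : R[X]} (hg : g ≠ 0) :
    f + g * X ^ N ≠ 0 := by
  intro h
  refine hg (Polynomial.ext fun i => ?_)
  obtain ⟨j, hj⟩ := range_coeff_right_subset hN g (Set.mem_range_self i)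
  rw [← hj, h, coeff_zero, coeff_zero]

end

section Nagata

variable {E : Type*} [Field E]

/-- `W` is a valuation ring of the field `L`. Both are kept inside one ambient field, so that
valuation rings of the different fields of a tower can be compared. -/
structure IsValuationRingOf (W : Subring E) (L : Subfield E) : Prop where
  le : W ≤ L.toSubring
  mem_or_inv_mem : ∀ x ∈ L, x ∈ W ∨ x⁻¹ ∈ W

namespace IsValuationRingOf

variable {W : Subring E} {L : Subfield E}

/-- The valuation ring `W` of `L` as a Mathlib valuation subring of the type `L`. -/
def toValuationSubring (hW : IsValuationRingOf W L) : ValuationSubring L where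
  toSubring := W.comap L.subtype
  mem_or_inv_mem' x := hW.mem_or_inv_mem x x.2

lemma div_mem_or_div_mem (hW : IsValuationRingOf W L) {x y : E} (hx : x ∈ L) (hy : y ∈ L) :
    x / y ∈ W ∨ y / x ∈ W := by
  simpa only [inv_div] using hW.mem_or_inv_mem (x / y) (L.div_mem hx hy)

lemma valuationRing (hW : IsValuationRingOf W L) : ValuationRing W where
  cond' a b := by
    by_cases ha : (a : E) = 0
    · exact ⟨0, .inr (Subtype.ext (by simp [ha]))⟩
    by_cases hb : (b : E) = 0
    · exact ⟨0, .inl (Subtype.ext (by simp [hb]))⟩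
    rcases hW.div_mem_or_div_mem (hW.le b.2) (hW.le a.2) with h | h
    · exact ⟨⟨_, h⟩, .inl (Subtype.ext (mul_div_cancel₀ (b : E) ha))⟩
    · exact ⟨⟨_, h⟩, .inr (Subtype.ext (mul_div_cancel₀ (a : E) hb))⟩

lemma inf (hW : IsValuationRingOf W L) {L' : Subfield E} (h : L' ≤ L) :
    IsValuationRingOf (W ⊓ L'.toSubring) L' where
  le := inf_le_right
  mem_or_inv_mem x hx :=
    (hW.mem_or_inv_mem x (h hx)).imp (⟨·, hx⟩) (⟨·, L'.inv_mem hx⟩)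

lemma exists_max_image (hW : IsValuationRingOf W L) {ι : Type*} {s : Finset ι} (hs : s.Nonempty)
    {a : ι → E} (ha : ∀ i ∈ s, a i ∈ L) :
    ∃ j ∈ s, ∀ i ∈ s, a i / a j ∈ W := by
  obtain ⟨j, -, hj⟩ := s.attach.exists_max_image
    (fun i => hW.toValuationSubring.valuation ⟨a i, ha i i.2⟩) hs.attach
  refine ⟨j, j.2, fun i hi => ?_⟩
  have hle : hW.toValuationSubring.valuation (⟨a i, ha i hi⟩ / ⟨a j, ha j j.2⟩) ≤ 1 := by
    rw [map_div₀]
    exact div_le_one_of_le₀ (hj ⟨i, hi⟩ (Finset.mem_attach _ _)) zero_le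
  exact (hW.toValuationSubring.valuation_le_one_iff _).mp hle

lemma exists_eq_C_mul_map (hW : IsValuationRingOf W L) {f : E[X]} (hf : ∀ i, f.coeff i ∈ L)
    (hf₀ : f ≠ 0) :
    ∃ j, f.coeff j ≠ 0 ∧ ∃ g : W[X], g.contentIdeal = ⊤ ∧
      f = C (f.coeff j) * g.map (algebraMap W E) := by
  obtain ⟨j, hj, hmax⟩ := hW.exists_max_image (support_nonempty.mpr hf₀) (fun i _ => hf i)
  rw [mem_support_iff] at hj
  have hlift : C (f.coeff j)⁻¹ * f ∈ lifts (algebraMap W E) := by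
    refine (lifts_iff_coeff_lifts _).mpr fun i => ?_
    rw [coeff_C_mul, ← div_eq_inv_mul]
    by_cases hi : i ∈ f.support
    · exact ⟨⟨_, hmax i hi⟩, rfl⟩
    · exact ⟨0, by simp [notMem_support_iff.mp hi]⟩
  obtain ⟨g, hg⟩ := (mem_lifts _).mp hlift
  refine ⟨j, hj, g, ?_, ?_⟩
  · have hgj : g.coeff j = 1 := Subtype.ext <| by
      simpa [hj] using congr_arg (coeff · j) hg
    exact (Ideal.eq_top_iff_one _).mpr (hgj ▸ g.coeff_mem_contentIdeal j)
  · rw [hg, ← mul_assoc, ← C_mul, mul_inv_cancel₀ hj, C_1, one_mul]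

end IsValuationRingOf

lemma mem_closure_union_singleton_iff {L : Subfield E} {T x : E} :
    x ∈ Subfield.closure ((L : Set E) ∪ {T}) ↔ ∃ f g : L[X], x = aeval T f / aeval T g := by
  rw [← IntermediateField.mem_adjoin_simple_iff L x, ← IntermediateField.mem_toSubfield,
    IntermediateField.adjoin_toSubfield]
  congr! 3
  exact (Subtype.range_coe (s := (L : Set E))).symm

lemma transcendental_of_le {W : Subring E} {L : Subfield E} (h : W ≤ L.toSubring) {T : E}
    (hT : Transcendental L T) : Transcendental W T :=
  letI : Algebra W L := (Subring.inclusion h).toAlgebra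
  haveI : IsScalarTower W L E := .of_algebraMap_eq fun _ => rfl
  hT.restrictScalars (Subring.inclusion_injective h)

lemma aeval_ne_zero {R A : Type*} [CommRing R] [Ring A] [Algebra R A] {T : A}
    (hT : Transcendental R T) {f : R[X]} (hf : f ≠ 0) : aeval T f ≠ 0 :=
  fun h => hf (transcendental_iff.mp hT f h)

lemma ne_zero_of_transcendental {R A : Type*} [CommRing R] [Nontrivial R] [Ring A] [Algebra R A]
    {T : A} (hT : Transcendental R T) : T ≠ 0 := by
  rintro rfl
  exact hT isAlgebraic_zero

lemma aeval_eq_of_map_eq {R S : Type*} [CommRing R] [CommRing S] [Algebra R E] [Algebra S E]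
    (T : E) {f : S[X]} {g : R[X]} {c : E}
    (h : f.map (algebraMap S E) = C c * g.map (algebraMap R E)) :
    aeval T f = c * aeval T g := by
  rw [← eval_map_algebraMap, h, eval_mul, eval_C, eval_map_algebraMap]

/-- The Nagata ring `R(T)` inside a field containing `R` and `T`: the fractions `f(T) / g(T)` such
that the coefficients of `g` generate the unit ideal. Fractions with `g(T) = 0` have the value `0`,
so this is a subring even when `T` is algebraic over `R`. -/
def nagata (R : Type*) [CommRing R] [Algebra R E] (T : E) : Subring E where
  carrier := {x | ∃ f g : R[X], g.contentIdeal = ⊤ ∧ x = aeval T f / aeval T g}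
  zero_mem' := ⟨0, 1, contentIdeal_one, by simp⟩
  one_mem' := ⟨1, 1, contentIdeal_one, by simp⟩
  neg_mem' := by
    rintro _ ⟨f, g, hg, rfl⟩
    exact ⟨-f, g, hg, by rw [map_neg, neg_div]⟩
  mul_mem' := by
    rintro _ _ ⟨f, g, hg, rfl⟩ ⟨f', g', hg', rfl⟩
    exact ⟨f * f', g * g', contentIdeal_mul_eq_top_of_contentIdeal_eq_top hg hg',
      by rw [map_mul, map_mul, div_mul_div_comm]⟩
  add_mem' := by
    rintro _ _ ⟨f, g, hg, rfl⟩ ⟨f', g', hg', rfl⟩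
    by_cases h : aeval T g = 0
    · exact ⟨f', g', hg', by rw [h, div_zero, zero_add]⟩
    by_cases h' : aeval T g' = 0
    · exact ⟨f, g, hg, by rw [h', div_zero, add_zero]⟩
    exact ⟨f * g' + g * f', g * g', contentIdeal_mul_eq_top_of_contentIdeal_eq_top hg hg',
      by simp only [map_add, map_mul, div_add_div _ _ h h']⟩

section

variable {R : Type*} [CommRing R] [Algebra R E] {T : E}

lemma algebraMap_mem_nagata (a : R) : algebraMap R E a ∈ nagata R T :=
  ⟨C a, 1, contentIdeal_one, by simp⟩

lemma self_mem_nagata : T ∈ nagata R T :=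
  ⟨X, 1, contentIdeal_one, by simp⟩

lemma inv_self_mem_nagata : T⁻¹ ∈ nagata R T :=
  ⟨1, X, by rw [← monomial_one_one_eq_X, contentIdeal_monomial, Ideal.span_singleton_one],
    by simp⟩

end

variable {W : Subring E} {L : Subfield E} {T : E}

lemma le_nagata : W ≤ nagata W T := fun x hx => algebraMap_mem_nagata (⟨x, hx⟩ : W)

lemma mem_of_mem_nagata (hW : W ≤ L.toSubring) (hT : Transcendental L T) {x : E} (hx : x ∈ L)
    (h : x ∈ nagata W T) : x ∈ W := by
  obtain ⟨f, g, hg, e⟩ := h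
  have hg₀ : g ≠ 0 := by
    rintro rfl
    simp at hg
  let φ : W →+* L := Subring.inclusion hW
  have aeval_map (p : W[X]) : aeval T (p.map φ) = aeval T p := by
    rw [← eval_map_algebraMap, map_map, ← eval_map_algebraMap]
    rfl
  have hxg : aeval T f = x * aeval T g :=
    (eq_div_iff (aeval_ne_zero (transcendental_of_le hW hT) hg₀)).mp e |>.symm
  have hfg : f.map φ = C ⟨x, hx⟩ * g.map φ := by
    refine transcendental_iff_injective.mp hT ?_
    rw [map_mul, aeval_C, aeval_map, aeval_map, hxg]
    rfl
  have hcoeff (i : ℕ) : x * g.coeff i ∈ W := by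
    have hi := congr_arg (fun p : L[X] => (p.coeff i : E)) hfg
    simp only [coeff_map, coeff_C_mul, Subfield.coe_mul] at hi
    exact hi ▸ (f.coeff i).2
  have hmem : ∀ a ∈ g.contentIdeal, x * a ∈ W := by
    intro a ha
    induction ha using Submodule.span_induction with
    | mem a ha =>
      obtain ⟨i, -, rfl⟩ := mem_coeffs_iff.mp ha
      exact hcoeff i
    | zero => simp
    | add a b _ _ ha hb => simpa only [Subring.coe_add, mul_add] using W.add_mem ha hb
    | smul c a _ ha =>
      rw [smul_eq_mul, Subring.coe_mul, mul_left_comm]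
      exact W.mul_mem c.2 ha
  simpa using hmem 1 (hg ▸ Submodule.mem_top)

lemma nagata_le_closure (hW : W ≤ L.toSubring) :
    nagata W T ≤ (Subfield.closure ((L : Set E) ∪ {T})).toSubring := by
  have aeval_mem (p : W[X]) : aeval T p ∈ Subfield.closure ((L : Set E) ∪ {T}) := by
    rw [aeval_eq_sum_range]
    exact sum_mem fun i _ => mul_mem (Subfield.subset_closure (.inl (hW (p.coeff i).2)))
      (pow_mem (Subfield.subset_closure (.inr rfl)) i)
  rintro _ ⟨f, g, -, rfl⟩
  exact Subfield.div_mem _ (aeval_mem f) (aeval_mem g)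

lemma coeff_map_algebraMap_mem (f : L[X]) (i : ℕ) : (f.map (algebraMap L E)).coeff i ∈ L := by
  rw [coeff_map]
  exact (f.coeff i).2

lemma map_algebraMap_ne_zero {f : L[X]} (hf : f ≠ 0) : f.map (algebraMap L E) ≠ 0 :=
  (Polynomial.map_ne_zero_iff (algebraMap L E).injective).mpr hf

lemma IsValuationRingOf.exists_aeval_eq (hW : IsValuationRingOf W L) {f : L[X]} (hf : f ≠ 0) :
    ∃ j, f.coeff j ≠ 0 ∧ ∃ g : W[X], g.contentIdeal = ⊤ ∧
      f.map (algebraMap L E) = C (f.coeff j : E) * g.map (algebraMap W E) := by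
  obtain ⟨j, hj, g, hg, e⟩ :=
    hW.exists_eq_C_mul_map (coeff_map_algebraMap_mem f) (map_algebraMap_ne_zero hf)
  rw [coeff_map] at hj e
  exact ⟨j, by simpa using hj, g, hg, e⟩

theorem IsValuationRingOf.nagata (hW : IsValuationRingOf W L) (T : E) :
    IsValuationRingOf (nagata W T) (Subfield.closure ((L : Set E) ∪ {T})) where
  le := nagata_le_closure hW.le
  mem_or_inv_mem x hx := by
    obtain ⟨f, g, rfl⟩ := mem_closure_union_singleton_iff.mp hx
    by_cases hf : f = 0
    · exact .inl (by simp [hf])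
    by_cases hg : g = 0
    · exact .inl (by simp [hg])
    obtain ⟨i, -, f₁, hf₁, ef⟩ := hW.exists_aeval_eq hf
    obtain ⟨j, -, g₁, hg₁, eg⟩ := hW.exists_aeval_eq hg
    rw [inv_div, aeval_eq_of_map_eq T ef, aeval_eq_of_map_eq T eg, mul_div_mul_comm,
      mul_div_mul_comm]
    exact (hW.div_mem_or_div_mem (f.coeff i).2 (g.coeff j).2).imp
      (fun h => mul_mem (le_nagata h) ⟨f₁, g₁, hg₁, rfl⟩)
      (fun h => mul_mem (le_nagata h) ⟨g₁, f₁, hf₁, rfl⟩)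

/-- The valuation overrings of `D` in the field `L`. -/
def valuationOverrings (D : Subring E) (L : Subfield E) : Set (Subring E) :=
  {W | D ≤ W ∧ IsValuationRingOf W L}

/-- The Kronecker function ring `Kr_{L(T)}(D, b)` inside the ambient field. -/
def kroneckerRing (D : Subring E) (L : Subfield E) (T : E) : Subring E :=
  ⨅ W ∈ valuationOverrings D L, nagata W T

variable {D : Subring E}

lemma mem_kroneckerRing {x : E} :
    x ∈ kroneckerRing D L T ↔ ∀ W ∈ valuationOverrings D L, x ∈ nagata W T := by
  simp only [kroneckerRing, Subring.mem_iInf]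

lemma self_mem_kroneckerRing : T ∈ kroneckerRing D L T :=
  mem_kroneckerRing.mpr fun _ _ => self_mem_nagata

lemma inv_self_mem_kroneckerRing : T⁻¹ ∈ kroneckerRing D L T :=
  mem_kroneckerRing.mpr fun _ _ => inv_self_mem_nagata

lemma le_kroneckerRing : D ≤ kroneckerRing D L T :=
  fun _ hx => mem_kroneckerRing.mpr fun _ hW => le_nagata (hW.1 hx)

theorem div_mem_kroneckerRing_of_range_coeff_subset {f g : L[X]}
    (h : Set.range f.coeff ⊆ Set.range g.coeff) :
    aeval T f / aeval T g ∈ kroneckerRing D L T := by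
  by_cases hg : g = 0
  · simp [hg]
  refine mem_kroneckerRing.mpr fun W hW => ?_
  obtain ⟨j, hj, g₁, hg₁, e⟩ := hW.2.exists_aeval_eq hg
  have hj' : (g.coeff j : E) ≠ 0 := by simpa using hj
  have hlift : C (g.coeff j : E)⁻¹ * f.map (algebraMap L E) ∈ lifts (algebraMap W E) := by
    refine (lifts_iff_coeff_lifts _).mpr fun i => ?_
    obtain ⟨l, hl⟩ := h (Set.mem_range_self i)
    have hcoeff := congr_arg (coeff · l) e
    simp only [coeff_map, coeff_C_mul] at hcoeff
    refine ⟨g₁.coeff l, ?_⟩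
    rw [coeff_C_mul, coeff_map, ← hl]
    exact ((inv_mul_eq_iff_eq_mul₀ hj').mpr hcoeff).symm
  obtain ⟨f₁, hf₁⟩ := (mem_lifts _).mp hlift
  have ef : f.map (algebraMap L E) = C (g.coeff j : E) * f₁.map (algebraMap W E) := by
    rw [hf₁, ← mul_assoc, ← C_mul, mul_inv_cancel₀ hj', C_1, one_mul]
  refine ⟨f₁, g₁, hg₁, ?_⟩
  rw [aeval_eq_of_map_eq T ef, aeval_eq_of_map_eq T e, mul_div_mul_left _ _ hj']

lemma coeff_div_mem_kroneckerRing (f : L[X]) (j : ℕ) :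
    (f.coeff j : E) / aeval T f ∈ kroneckerRing D L T := by
  rw [← show aeval T (C (f.coeff j)) = (f.coeff j : E) from aeval_C T _]
  refine div_mem_kroneckerRing_of_range_coeff_subset ?_
  rintro _ ⟨i, rfl⟩
  rw [coeff_C]
  split_ifs
  · exact ⟨j, rfl⟩
  · exact zero_mem_range_coeff f

-- For `x = f(T) / g(T)` and large `N` the polynomial `f + g T ^ N` has the coefficients of both
-- `f` and `g`.
theorem exists_div_one_add_mem_kroneckerRing (hT : Transcendental L T) {x : E}
    (hx : x ∈ Subfield.closure ((L : Set E) ∪ {T})) :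
    ∃ N₀ : ℕ, ∀ N ≥ N₀, 1 + T⁻¹ ^ N * x ≠ 0 ∧ 1 / (1 + T⁻¹ ^ N * x) ∈ kroneckerRing D L T ∧
      x / (1 + T⁻¹ ^ N * x) ∈ kroneckerRing D L T := by
  obtain ⟨f, g, rfl⟩ := mem_closure_union_singleton_iff.mp hx
  by_cases hg : g = 0
  · exact ⟨0, fun N _ => by simp [hg]⟩
  refine ⟨f.natDegree + 1, fun N hN => ?_⟩
  have hT₀ : T ≠ 0 := ne_zero_of_transcendental hT
  have hgT : aeval T g ≠ 0 := aeval_ne_zero hT hg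
  have hhT : aeval T f + aeval T g * T ^ N ≠ 0 := by
    simpa using aeval_ne_zero hT (add_mul_X_pow_ne_zero (N := N) (by lia) hg)
  have e : 1 + T⁻¹ ^ N * (aeval T f / aeval T g) =
      (aeval T f + aeval T g * T ^ N) / (aeval T g * T ^ N) := by
    rw [inv_pow]
    field_simp
    ring
  rw [e]
  refine ⟨div_ne_zero hhT (mul_ne_zero hgT (pow_ne_zero N hT₀)), ?_, ?_⟩
  · convert! div_mem_kroneckerRing_of_range_coeff_subset (D := D) (T := T)
      ((range_coeff_mul_X_pow_subset g N).trans
        (range_coeff_right_subset (f := f) (N := N) (by lia) g)) using 1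
    simp
  · convert! div_mem_kroneckerRing_of_range_coeff_subset (D := D) (T := T)
      ((range_coeff_mul_X_pow_subset f N).trans
        (range_coeff_left_subset (f := f) (N := N) (by lia) g)) using 1
    simp only [map_add, map_mul, map_pow, aeval_X]
    field_simp

/-- `x` and `y` generate the same fractional ideal of `W`. For `x = y = 0` this holds because
`0 / 0 = 0`. -/
def SameIdeal (W : Subring E) (x y : E) : Prop :=
  x / y ∈ W ∧ y / x ∈ W

lemma SameIdeal.div {x y x' y' : E} (h : SameIdeal W x y) (h' : SameIdeal W x' y') :
    SameIdeal W (x / x') (y / y') :=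
  ⟨by rw [div_div_div_eq, mul_comm x', ← div_mul_div_comm]; exact mul_mem h.1 h'.2,
    by rw [div_div_div_eq, mul_comm y', ← div_mul_div_comm]; exact mul_mem h.2 h'.1⟩

lemma exists_sameIdeal_aeval {V : Subring E}
    (hV : IsValuationRingOf V (Subfield.closure ((L : Set E) ∪ {T})))
    (hDV : kroneckerRing D L T ≤ V) {f : L[X]} (hf : f ≠ 0) :
    ∃ y ∈ L, y ≠ 0 ∧ SameIdeal V (aeval T f) y := by
  have hL : L ≤ Subfield.closure ((L : Set E) ∪ {T}) :=
    fun _ h => Subfield.subset_closure (.inl h)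
  obtain ⟨j, hj, g, -, e⟩ := hV.exists_eq_C_mul_map
    (fun i => hL (coeff_map_algebraMap_mem f i)) (map_algebraMap_ne_zero hf)
  rw [coeff_map] at hj e
  replace e : aeval T f = algebraMap L E (f.coeff j) * aeval T g := aeval_eq_of_map_eq T e
  have hg : aeval T g ∈ V := by
    rw [aeval_eq_sum_range]
    exact sum_mem fun i _ => mul_mem (g.coeff i).2 (pow_mem (hDV self_mem_kroneckerRing) i)
  refine ⟨f.coeff j, (f.coeff j).2, hj, ?_, hDV (coeff_div_mem_kroneckerRing f j)⟩
  rw [e]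
  exact (mul_div_cancel_left₀ (aeval T g) hj).symm ▸ hg

theorem exists_sameIdeal_of_kroneckerRing_le {V : Subring E}
    (hV : IsValuationRingOf V (Subfield.closure ((L : Set E) ∪ {T})))
    (hDV : kroneckerRing D L T ≤ V) {x : E} (hx : x ∈ Subfield.closure ((L : Set E) ∪ {T}))
    (hx₀ : x ≠ 0) :
    ∃ y ∈ L, y ≠ 0 ∧ SameIdeal V x y := by
  obtain ⟨f, g, rfl⟩ := mem_closure_union_singleton_iff.mp hx
  obtain ⟨a, haL, ha₀, ha⟩ := exists_sameIdeal_aeval hV hDV (f := f) (by rintro rfl; simp at hx₀)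
  obtain ⟨b, hbL, hb₀, hb⟩ := exists_sameIdeal_aeval hV hDV (f := g) (by rintro rfl; simp at hx₀)
  exact ⟨a / b, L.div_mem haL hbL, div_ne_zero ha₀ hb₀, ha.div hb⟩

end Nagata

section Dimension

lemma ringKrullDim_le_of_forall_associated {R S : Type*} [CommRing R] [CommRing S] (φ : R →+* S)
    (h : ∀ s, ∃ r, Associated (φ r) s) : ringKrullDim S ≤ ringKrullDim R := by
  have comap_le {p q : PrimeSpectrum S} (hpq : p.comap φ ≤ q.comap φ) : p ≤ q := by
    intro s hs
    obtain ⟨r, hr⟩ := h s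
    exact (q.asIdeal.mem_iff_of_associated hr).mp
      (hpq ((p.asIdeal.mem_iff_of_associated hr).mpr hs))
  exact Order.krullDim_le_of_strictMono (PrimeSpectrum.comap φ) fun p q hpq =>
    ⟨fun _ hx => hpq.1 hx, fun hqp => hpq.not_ge (comap_le hqp)⟩

lemma ringKrullDim_iSup_le {R ι : Type*} [CommRing R] [Nonempty ι] {S : ι → Subring R}
    (hS : Directed (· ≤ ·) S) {d : WithBot ℕ∞} (h : ∀ i, ringKrullDim (S i) ≤ d) :
    ringKrullDim ↥(⨆ i, S i) ≤ d := by
  refine iSup_le fun l => ?_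
  have hstep (j : Fin l.length) : ∃ x ∈ (l j.succ).asIdeal, x ∉ (l j.castSucc).asIdeal :=
    SetLike.exists_of_lt (l.step j)
  choose x hx hx' using hstep
  choose i hi using fun j => (Subring.mem_iSup_of_directed hS).mp (x j).2
  obtain ⟨m, hm⟩ := hS.finite_le i
  let φ : S m →+* ↥(⨆ i, S i) := Subring.inclusion (le_iSup S m)
  let l' : LTSeries (PrimeSpectrum (S m)) :=
    { length := l.length
      toFun := fun j => (l j).comap φ
      step := fun j => SetLike.lt_iff_le_and_exists.mpr
        ⟨Ideal.comap_mono (l.step j).le, ⟨x j, hm j (hi j)⟩, hx j, hx' j⟩ }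
  exact (Order.LTSeries.length_le_krullDim l').trans (h m)

lemma ringKrullDim_le_of_hasGoingDown {R S : Type*} [CommRing R] [CommRing S] [Algebra R S]
    [Algebra.HasGoingDown R S] (h : Function.Surjective (PrimeSpectrum.comap (algebraMap R S))) :
    ringKrullDim R ≤ ringKrullDim S := by
  refine iSup_le fun l => ?_
  obtain ⟨P, hP⟩ := h l.last
  have : P.asIdeal.LiesOver l.last.asIdeal := ⟨by rw [← hP]; rfl⟩
  obtain ⟨l', hl', -⟩ := P.asIdeal.exists_ltSeries_of_hasGoingDown l
  exact hl' ▸ Order.LTSeries.length_le_krullDim l'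

theorem ringKrullDim_le_of_isLocalHom {R S : Type*} [CommRing R] [IsDomain R] [ValuationRing R]
    [CommRing S] [IsDomain S] [IsLocalRing S] [Algebra R S] [FaithfulSMul R S]
    [IsLocalHom (algebraMap R S)] : ringKrullDim R ≤ ringKrullDim S := by
  have : Module.Flat R S := Module.Flat.flat_iff_torsion_eq_bot_of_isBezout.mpr
    (Submodule.isTorsionFree_iff_torsion_eq_bot.mp inferInstance)
  have : Module.FaithfullyFlat R S := .of_flat_of_isLocalHom
  exact ringKrullDim_le_of_hasGoingDown PrimeSpectrum.comap_surjective_of_faithfullyFlat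

universe u v

variable {k : Type u} [Field k] {A B : Type v} [CommRing A] [Algebra k A] [CommRing B] [Algebra k B]

-- A relation between the transcendental lifts and a nonzero `s ∈ ker φ` has a nonzero constant
-- coefficient divisible by `s`, hence killed by `φ`.
lemma trdeg_add_one_le_of_surjective [IsDomain A] [IsDomain B] (φ : A →ₐ[k] B)
    (hφ : Function.Surjective φ) {s : A} (hs : s ≠ 0) (hφs : φ s = 0) :
    Algebra.trdeg k B + 1 ≤ Algebra.trdeg k A := by
  obtain ⟨t, ht⟩ := exists_isTranscendenceBasis k B
  choose x hx using fun y : t => hφ y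
  have hφx : AlgebraicIndependent k (φ ∘ x) := by
    rw [show φ ∘ x = Subtype.val from funext hx]
    exact ht.1
  have hindep : AlgebraicIndependent k x := .of_comp φ hφx
  have hs : Transcendental (Algebra.adjoin k (Set.range x)) s := by
    intro halg
    obtain ⟨⟨a, ha⟩, ha₀, b, hb⟩ := halg.exists_nonzero_dvd (mem_nonZeroDivisors_of_ne_zero hs)
    rw [Algebra.adjoin_range_eq_range_aeval] at ha
    obtain ⟨p, rfl⟩ := ha
    have hp : MvPolynomial.aeval (φ ∘ x) p = 0 := by
      have := congr_arg φ hb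
      rw [map_mul, hφs, zero_mul] at this
      exact (MvPolynomial.comp_aeval_apply (f := x) φ p).symm.trans this
    exact ha₀ (Subtype.ext (by simp [(injective_iff_map_eq_zero _).mp hφx p hp]))
  have := ((hindep.option_iff_transcendental s).mpr hs).cardinalMk_le_trdeg
  rwa [Cardinal.mk_option, ht.cardinalMk_eq_trdeg] at this

lemma length_le_trdeg_quotient_head (l : LTSeries (PrimeSpectrum A)) :
    (l.length : Cardinal) ≤ Algebra.trdeg k (A ⧸ l.head.asIdeal) := by
  induction l using RelSeries.inductionOn with
  | singleton p => simp
  | cons l p hp ih =>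
    replace hp : p.asIdeal < l.head.asIdeal := hp
    obtain ⟨s, hs, hs'⟩ := SetLike.exists_of_lt hp
    have := trdeg_add_one_le_of_surjective (Ideal.Quotient.factorₐ k hp.le)
      (Ideal.Quotient.factor_surjective hp.le) (s := Ideal.Quotient.mk _ s)
      (by rwa [Ne, Ideal.Quotient.eq_zero_iff_mem])
      (by rwa [Ideal.Quotient.factorₐ_apply_mk, Ideal.Quotient.eq_zero_iff_mem])
    rw [RelSeries.cons_length, Nat.cast_succ, RelSeries.head_cons]
    exact le_trans (add_le_add_left ih 1) this

theorem ringKrullDim_le_of_trdeg_le {n : ℕ} (h : Algebra.trdeg k A ≤ n) :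
    ringKrullDim A ≤ n := by
  refine iSup_le fun l => ?_
  have hl := (length_le_trdeg_quotient_head (k := k) l).trans
    ((trdeg_le_of_surjective (Ideal.Quotient.mkₐ k l.head.asIdeal)
      Ideal.Quotient.mk_surjective).trans h)
  exact_mod_cast hl

end Dimension

variable {E : Type*} [Field E]

section Pullback

variable {Γ₀ : Type*} [LinearOrderedCommGroupWithZero Γ₀]

/-- The ring `R + 𝔪` inside the field `K`, where `𝔪` is the maximal ideal of the valuation ring of
`v`, that is, the pullback of `R` along the residue map. -/
def pullback (v : Valuation E Γ₀) (R : Subring E) (K : Subfield E) : Subring E where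
  carrier := {x | x ∈ K ∧ ∃ c ∈ R, v c ≤ 1 ∧ v (x - c) < 1}
  zero_mem' := ⟨K.zero_mem, 0, R.zero_mem, by simp, by simp⟩
  one_mem' := ⟨K.one_mem, 1, R.one_mem, by simp, by simp⟩
  neg_mem' := by
    rintro x ⟨hx, c, hc, hvc, h⟩
    exact ⟨K.neg_mem hx, -c, R.neg_mem hc, by rwa [v.map_neg],
      by rwa [neg_sub_neg, v.map_sub_swap]⟩
  add_mem' := by
    rintro x y ⟨hx, c, hc, hvc, h⟩ ⟨hy, d, hd, hvd, h'⟩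
    refine ⟨K.add_mem hx hy, c + d, R.add_mem hc hd, v.map_add_le hvc hvd, ?_⟩
    rw [add_sub_add_comm]
    exact v.map_add_lt h h'
  mul_mem' := by
    rintro x y ⟨hx, c, hc, hvc, h⟩ ⟨hy, d, hd, hvd, h'⟩
    have hvx : v x ≤ 1 := by simpa using v.map_add_le h.le hvc
    refine ⟨K.mul_mem hx hy, c * d, R.mul_mem hc hd, by simpa using mul_le_one' hvc hvd, ?_⟩
    rw [show x * y - c * d = x * (y - d) + (x - c) * d by ring]
    refine v.map_add_lt ?_ ?_
    · exact (map_mul v _ _).trans_lt (mul_lt_one_of_nonneg_of_lt_one_right hvx zero_le h')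
    · exact (map_mul v _ _).trans_lt (mul_lt_one_of_nonneg_of_lt_one_left zero_le h hvd)

variable {v : Valuation E Γ₀} {R : Subring E} {K : Subfield E} {x : E}

lemma pullback_le : pullback v R K ≤ K.toSubring := fun _ hx => hx.1

lemma le_one_of_mem_pullback (hx : x ∈ pullback v R K) : v x ≤ 1 := by
  obtain ⟨-, c, -, hc, h⟩ := hx
  simpa using v.map_add_le h.le hc

lemma mem_pullback_of_lt (hx : x ∈ K) (h : v x < 1) : x ∈ pullback v R K :=
  ⟨hx, 0, R.zero_mem, by simp, by simpa using h⟩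

lemma mem_pullback_of_mem (hx : x ∈ K) (hR : x ∈ R) (h : v x ≤ 1) : x ∈ pullback v R K :=
  ⟨hx, x, hR, h, by simp⟩

lemma pullback_mono {R' : Subring E} {K' : Subfield E} (hR : R ≤ R') (hK : K ≤ K') :
    pullback v R K ≤ pullback v R' K' :=
  fun _ ⟨hx, c, hc, h⟩ => ⟨hK hx, c, hR hc, h⟩

lemma map_inv_sub_inv_lt_one {c : E} (hc : v c = 1) (h : v (x - c) < 1) : v (x⁻¹ - c⁻¹) < 1 := by
  have hx : v x = 1 := by rw [← hc, v.map_eq_of_sub_lt (by rwa [hc])]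
  have hx₀ : x ≠ 0 := by rintro rfl; simp at hx
  have hc₀ : c ≠ 0 := by rintro rfl; simp at hc
  rwa [inv_sub_inv hx₀ hc₀, map_div₀, map_mul, hx, hc, mul_one, div_one, v.map_sub_swap]

lemma inv_mem_pullback {k : Subfield E} (hx : x ∈ pullback v k.toSubring K) (h : v x = 1) :
    x⁻¹ ∈ pullback v k.toSubring K := by
  obtain ⟨hK, c, hc, -, hxc⟩ := hx
  have hvc : v c = 1 := by rw [← h, v.map_eq_of_sub_lt (by rwa [h, v.map_sub_swap])]
  exact ⟨K.inv_mem hK, c⁻¹, k.inv_mem hc, by simp [hvc], map_inv_sub_inv_lt_one hvc hxc⟩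

/-- The center on `R` of a valuation whose valuation ring contains `R`. -/
def valuationCenter (v : Valuation E Γ₀) (R : Subring E) (h : R ≤ v.valuationSubring.toSubring) :
    Ideal R :=
  (IsLocalRing.maximalIdeal v.valuationSubring).comap (Subring.inclusion h)

lemma mem_valuationCenter {h : R ≤ v.valuationSubring.toSubring} {x : R} :
    x ∈ valuationCenter v R h ↔ v x < 1 :=
  v.mem_maximalIdeal_iff

instance isPrime_valuationCenter {h : R ≤ v.valuationSubring.toSubring} :
    (valuationCenter v R h).IsPrime :=
  Ideal.comap_isPrime _ _

lemma exists_pow_mul_lt_one [MulArchimedean Γ₀] {v : Valuation E Γ₀} (hx : v x < 1) (y : E) :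
    ∃ N₀ : ℕ, ∀ N ≥ N₀, v (x ^ N * y) < 1 := by
  by_cases hy : v y = 0
  · exact ⟨0, fun N _ => by simp [hy]⟩
  obtain ⟨N₀, h⟩ := exists_pow_lt₀ hx (Units.mk0 (v y) hy)⁻¹
  refine ⟨N₀, fun N hN => ?_⟩
  rw [Units.val_inv_eq_inv_val, Units.val_mk0] at h
  rw [map_mul, map_pow, ← inv_mul_cancel₀ hy]
  exact mul_lt_mul_of_pos_right ((pow_le_pow_right_of_le_one' hx.le hN).trans_lt h)
    (zero_lt_iff.mpr hy)

end Pullback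

/-- A tower of fields `K 0 ⊆ K 1 ⊆ ⋯` in which `K (n + 1) = K n (T n)` for a transcendental element
`T n` having a simple pole at the discrete valuation `v`, together with trivially valued subfields
`k n` of `K n`. The last three conditions, on the rings `A n = k n + 𝔪`, say that `A n` is
integrally closed and that the valuative dimensions of the `A n` are at most `r` and that of `A 0`
is at least `r`. -/
structure Tower (E : Type*) [Field E] (r : ℕ) where
  K : ℕ → Subfield E
  k : ℕ → Subfield E
  T : ℕ → E
  v : Valuation E ℤᵐ⁰
  k_le (n : ℕ) : k n ≤ K n
  k_succ (n : ℕ) : k n ≤ k (n + 1)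
  transcendental (n : ℕ) : Transcendental (K n) (T n)
  K_succ (n : ℕ) : K (n + 1) = Subfield.closure ((K n : Set E) ∪ {T n})
  v_T (n : ℕ) : v (T n) = exp (1 : ℤ)
  v_le_one (n : ℕ) : ∀ c ∈ k n, v c ≤ 1
  integrallyClosed (n : ℕ) : ∀ x ∈ K n,
    (∀ W ∈ valuationOverrings (pullback v (k n).toSubring (K n)) (K n), x ∈ W) →
      x ∈ pullback v (k n).toSubring (K n)
  ringKrullDim_le (n : ℕ) : ∀ W : Subring E, IsValuationRingOf W (K n) → (k n).toSubring ≤ W →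
    ringKrullDim W ≤ r
  exists_le_ringKrullDim : ∃ W ∈ valuationOverrings (pullback v (k 0).toSubring (K 0)) (K 0),
    r ≤ ringKrullDim W

namespace Tower

variable {r : ℕ} (τ : Tower E r) {n : ℕ} {x : E}

/-- The ring `Aₙ = kₙ + Mₙ`. -/
def A (n : ℕ) : Subring E := pullback τ.v (τ.k n).toSubring (τ.K n)

/-- The ring `Dₙ`: `D₀ = A₀` and `Dₙ₊₁ = Kr(Dₙ, b) ∩ Aₙ₊₁`. -/
def D : ℕ → Subring E
  | 0 => τ.A 0
  | n + 1 => kroneckerRing (D n) (τ.K n) (τ.T n) ⊓ τ.A (n + 1)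

/-- The Kronecker function ring of `Dₙ`, which is the paper's `Bₙ₊₁`. -/
def B (n : ℕ) : Subring E := kroneckerRing (τ.D n) (τ.K n) (τ.T n)

/-- The field `K = ⋃ Kₙ`. -/
def KU : Subfield E := ⨆ n, τ.K n

/-- The ring `A = ⋃ Aₙ`. -/
def AU : Subring E := ⨆ n, τ.A n

/-- The ring `D = ⋃ Dₙ`. -/
def DU : Subring E := ⨆ n, τ.D n

/-- The inverse of `T n`, a uniformizer of `v`. -/
def t (n : ℕ) : E := (τ.T n)⁻¹

lemma D_le_A (n : ℕ) : τ.D n ≤ τ.A n := by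
  cases n with
  | zero => exact le_rfl
  | succ n => exact inf_le_right

lemma A_le_K (n : ℕ) : τ.A n ≤ (τ.K n).toSubring := pullback_le

lemma D_le_K (n : ℕ) : τ.D n ≤ (τ.K n).toSubring := (τ.D_le_A n).trans (τ.A_le_K n)

lemma K_mono : Monotone τ.K := monotone_nat_of_le_succ fun n x hx => by
  rw [τ.K_succ]
  exact Subfield.subset_closure (.inl hx)

lemma A_mono : Monotone τ.A := monotone_nat_of_le_succ fun n =>
  pullback_mono (τ.k_succ n) (τ.K_mono n.le_succ)

lemma D_mono : Monotone τ.D := monotone_nat_of_le_succ fun n =>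
  le_inf le_kroneckerRing ((τ.D_le_A n).trans (τ.A_mono n.le_succ))

lemma mem_KU : x ∈ τ.KU ↔ ∃ n, x ∈ τ.K n := Subfield.mem_iSup_of_directed τ.K_mono.directed_le

lemma mem_AU : x ∈ τ.AU ↔ ∃ n, x ∈ τ.A n := Subring.mem_iSup_of_directed τ.A_mono.directed_le

lemma mem_DU : x ∈ τ.DU ↔ ∃ n, x ∈ τ.D n := Subring.mem_iSup_of_directed τ.D_mono.directed_le

lemma DU_le_AU : τ.DU ≤ τ.AU := iSup_mono τ.D_le_A

lemma DU_le_KU : τ.DU ≤ τ.KU.toSubring :=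
  iSup_le fun n => (τ.D_le_K n).trans (le_iSup τ.K n)

lemma le_one_of_mem_AU (hx : x ∈ τ.AU) : τ.v x ≤ 1 := by
  obtain ⟨n, hn⟩ := τ.mem_AU.mp hx
  exact le_one_of_mem_pullback hn

lemma mem_A_of_lt (hx : x ∈ τ.K n) (h : τ.v x < 1) : x ∈ τ.A n := mem_pullback_of_lt hx h

/-- The prime ideal `𝓜` of `D`, which is the center of the valuation `v`. -/
def center : Ideal τ.DU :=
  valuationCenter τ.v τ.DU fun _ hx => τ.le_one_of_mem_AU (τ.DU_le_AU hx)

lemma mem_center {x : τ.DU} : x ∈ τ.center ↔ τ.v x < 1 := mem_valuationCenter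

lemma eq_one_of_notMem_center {x : τ.DU} (h : x ∉ τ.center) : τ.v x = 1 :=
  (τ.le_one_of_mem_AU (τ.DU_le_AU x.2)).antisymm (not_lt.mp (mt τ.mem_center.mpr h))

instance : τ.center.IsPrime := isPrime_valuationCenter

-- `Dₙ₊₁` is integrally closed because it is an intersection of two rings that are: each `W(T)` is a
-- valuation overring of `Dₙ₊₁`, and so is every valuation overring of `Aₙ₊₁`.
lemma mem_D_of_forall (hx : x ∈ τ.K n) (h : ∀ W ∈ valuationOverrings (τ.D n) (τ.K n), x ∈ W) :
    x ∈ τ.D n := by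
  cases n with
  | zero => exact τ.integrallyClosed 0 x hx h
  | succ n =>
    refine ⟨mem_kroneckerRing.mpr fun W hW => h _ ⟨?_, τ.K_succ n ▸ hW.2.nagata _⟩,
      τ.integrallyClosed _ x hx fun W hW => h W ⟨inf_le_right.trans hW.1, hW.2⟩⟩
    exact fun y hy => mem_kroneckerRing.mp hy.1 W hW

lemma mem_D_of_mem_B (hx : x ∈ τ.K n) (h : x ∈ τ.B n) : x ∈ τ.D n :=
  τ.mem_D_of_forall hx fun W hW =>
    mem_of_mem_nagata hW.2.le (τ.transcendental n) hx (mem_kroneckerRing.mp h W hW)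

lemma mem_D_of_mem_DU (hx : x ∈ τ.K n) (h : x ∈ τ.DU) : x ∈ τ.D n := by
  obtain ⟨m, hm⟩ := τ.mem_DU.mp h
  induction m with
  | zero => exact τ.D_mono n.zero_le hm
  | succ m ih =>
    rcases le_or_gt (m + 1) n with hmn | hmn
    · exact τ.D_mono hmn hm
    · exact ih (τ.mem_D_of_mem_B (τ.K_mono (Nat.le_of_lt_succ hmn) hx) hm.1)

lemma v_t (n : ℕ) : τ.v (τ.t n) = exp (-1 : ℤ) := by
  rw [t, map_inv₀, τ.v_T, exp_neg]

lemma v_t_lt_one (n : ℕ) : τ.v (τ.t n) < 1 := by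
  rw [v_t, ← exp_zero, exp_lt_exp]
  simp

lemma T_ne_zero (n : ℕ) : τ.T n ≠ 0 := ne_zero_of_transcendental (τ.transcendental n)

lemma t_ne_zero (n : ℕ) : τ.t n ≠ 0 := inv_ne_zero (τ.T_ne_zero n)

lemma t_mem_K (n : ℕ) : τ.t n ∈ τ.K (n + 1) := by
  rw [τ.K_succ]
  exact inv_mem (Subfield.subset_closure (.inr rfl))

lemma t_mem_B (n : ℕ) : τ.t n ∈ τ.B n := inv_self_mem_kroneckerRing

lemma T_mem_B (n : ℕ) : τ.T n ∈ τ.B n := self_mem_kroneckerRing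

lemma t_mem_D (n : ℕ) : τ.t n ∈ τ.D (n + 1) :=
  ⟨τ.t_mem_B n, τ.mem_A_of_lt (τ.t_mem_K n) (τ.v_t_lt_one n)⟩

lemma t_mem_DU (n : ℕ) : τ.t n ∈ τ.DU := le_iSup τ.D (n + 1) (τ.t_mem_D n)

lemma exists_pow_t_mul_mem_D (hB : x ∈ τ.B n) (hK : x ∈ τ.K (n + 1)) :
    ∃ N₀ : ℕ, ∀ N ≥ N₀, τ.t n ^ N * x ∈ τ.D (n + 1) := by
  obtain ⟨N₀, h⟩ := exists_pow_mul_lt_one (τ.v_t_lt_one n) x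
  exact ⟨N₀, fun N hN => ⟨mul_mem (pow_mem (τ.t_mem_B n) N) hB,
    τ.mem_A_of_lt (mul_mem (pow_mem (τ.t_mem_K n) N) hK) (h N hN)⟩⟩

lemma sq_div_t_mem_D (hx : x ∈ τ.D (n + 1)) (h : τ.v x < 1) : x ^ 2 / τ.t n ∈ τ.D (n + 1) := by
  have hK : x ^ 2 / τ.t n ∈ τ.K (n + 1) := div_mem (pow_mem (τ.D_le_K _ hx) 2) (τ.t_mem_K n)
  refine ⟨?_, τ.mem_A_of_lt hK ?_⟩
  · rw [t, div_inv_eq_mul]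
    exact mul_mem (pow_mem hx.1 2) (τ.T_mem_B n)
  · by_cases hx₀ : τ.v x = 0
    · simp [hx₀]
    rw [map_div₀, v_t, map_pow, ← exp_log hx₀, ← exp_nsmul, ← exp_sub, ← exp_zero, exp_lt_exp]
    rw [← exp_log hx₀, ← exp_zero, exp_lt_exp] at h
    simp only [nsmul_eq_mul, Nat.cast_ofNat]
    lia

lemma exists_div_one_add_mem_B (hx : x ∈ τ.K (n + 1)) : ∃ N₀ : ℕ, ∀ N ≥ N₀,
    1 + τ.t n ^ N * x ≠ 0 ∧ 1 / (1 + τ.t n ^ N * x) ∈ τ.B n ∧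
      x / (1 + τ.t n ^ N * x) ∈ τ.B n :=
  exists_div_one_add_mem_kroneckerRing (τ.transcendental n) (τ.K_succ n ▸ hx)

lemma one_add_pow_t_mul_mem_K (hx : x ∈ τ.K (n + 1)) (N : ℕ) :
    1 + τ.t n ^ N * x ∈ τ.K (n + 1) :=
  add_mem (one_mem _) (mul_mem (pow_mem (τ.t_mem_K n) N) hx)

lemma exists_div_one_add_mem_D (hx : x ∈ τ.A (n + 1)) : ∃ N : ℕ,
    N ≠ 0 ∧ τ.v (τ.t n ^ N * x) < 1 ∧ τ.v (1 + τ.t n ^ N * x) = 1 ∧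
      1 / (1 + τ.t n ^ N * x) ∈ τ.D (n + 1) ∧ x / (1 + τ.t n ^ N * x) ∈ τ.D (n + 1) := by
  obtain ⟨N₀, h⟩ := τ.exists_div_one_add_mem_B (τ.A_le_K _ hx)
  obtain ⟨N₁, h₁⟩ := exists_pow_mul_lt_one (τ.v_t_lt_one n) x
  set N := max N₀ N₁ + 1
  obtain ⟨-, hB, hB'⟩ := h N (by lia)
  have hlt : τ.v (τ.t n ^ N * x) < 1 := h₁ N (by lia)
  have hv : τ.v (1 + τ.t n ^ N * x) = 1 := τ.v.map_one_add_of_lt hlt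
  have hA : 1 / (1 + τ.t n ^ N * x) ∈ τ.A (n + 1) := by
    rw [one_div]
    refine inv_mem_pullback (add_mem (one_mem _) (τ.mem_A_of_lt ?_ hlt)) hv
    exact mul_mem (pow_mem (τ.t_mem_K n) N) (τ.A_le_K _ hx)
  refine ⟨N, Nat.succ_ne_zero _, hlt, hv, ⟨hB, hA⟩, hB', ?_⟩
  rw [div_eq_mul_one_div]
  exact mul_mem hx hA

lemma exists_eq_div (hx : x ∈ τ.K (n + 1)) : ∃ a ∈ τ.D (n + 1), ∃ b ∈ τ.D (n + 1), ∃ j N : ℕ,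
    b ≠ 0 ∧ x = a / b ∧ b + τ.t n ^ N * a = τ.t n ^ j := by
  obtain ⟨N, h⟩ := τ.exists_div_one_add_mem_B hx
  obtain ⟨hne, hb, ha⟩ := h N le_rfl
  have hu : 1 + τ.t n ^ N * x ∈ τ.K (n + 1) := τ.one_add_pow_t_mul_mem_K hx N
  obtain ⟨i, hi⟩ := τ.exists_pow_t_mul_mem_D ha (div_mem hx hu)
  obtain ⟨j, hj⟩ := τ.exists_pow_t_mul_mem_D hb (div_mem (one_mem _) hu)
  refine ⟨_, hi (max i j) (le_max_left _ _), _, hj (max i j) (le_max_right _ _), max i j, N,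
    mul_ne_zero (pow_ne_zero _ (τ.t_ne_zero n)) (one_div_ne_zero hne), ?_, ?_⟩
  · rw [mul_div_mul_left _ _ (pow_ne_zero _ (τ.t_ne_zero n)), div_div_div_cancel_right₀ hne,
      div_one]
  · field_simp

end Tower

section

variable {E : Type*} [Field E]

lemma inv_mem_of_isUnit {W : Subring E} {x : W} (hx : IsUnit x) : (x : E)⁻¹ ∈ W := by
  obtain ⟨y, hy⟩ := hx.exists_right_inv
  have : (x : E) * y = 1 := congr_arg Subtype.val hy
  exact inv_eq_of_mul_eq_one_right this ▸ y.2

lemma mem_ofPrime {A : Subring E} {P : Ideal A} [P.IsPrime] {x : E} :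
    x ∈ (LocalSubring.ofPrime A P).toSubring ↔ ∃ a b : A, b ∉ P ∧ x = a / b := by
  constructor
  · intro hx
    obtain ⟨⟨a, b⟩, h⟩ := IsLocalization.surj P.primeCompl
      (⟨x, hx⟩ : (LocalSubring.ofPrime A P).toSubring)
    have hb : ((b : A) : E) ≠ 0 := fun h₀ =>
      b.2 (by rw [show (b : A) = 0 from Subtype.ext h₀]; exact P.zero_mem)
    exact ⟨a, b, b.2, (eq_div_iff hb).mpr (congr_arg Subtype.val h)⟩
  · rintro ⟨a, b, hb, rfl⟩
    rw [div_eq_mul_inv]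
    refine mul_mem (LocalSubring.le_ofPrime A P a.2) ?_
    exact inv_mem_of_isUnit (IsLocalization.map_units (LocalSubring.ofPrime A P).toSubring
      (⟨b, hb⟩ : P.primeCompl))

lemma ofPrime_le {A : Subring E} {L : Subfield E} (h : A ≤ L.toSubring) (P : Ideal A)
    [P.IsPrime] : (LocalSubring.ofPrime A P).toSubring ≤ L.toSubring := by
  intro x hx
  obtain ⟨a, b, -, rfl⟩ := mem_ofPrime.mp hx
  exact L.div_mem (h a.2) (h b.2)

lemma IsValuationRingOf.eq_iSup {W : Subring E} {K : ℕ → Subfield E} (hK : Monotone K)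
    (hW : IsValuationRingOf W (⨆ n, K n)) : W = ⨆ n, W ⊓ (K n).toSubring := by
  refine le_antisymm (fun x hx => ?_) (iSup_le fun n => inf_le_left)
  obtain ⟨n, hn⟩ := (Subfield.mem_iSup_of_directed hK.directed_le).mp (hW.le hx)
  exact le_iSup (fun n => W ⊓ (K n).toSubring) n ⟨hx, hn⟩

lemma IsValuationRingOf.ringKrullDim_le {W W' : Subring E} {L L' : Subfield E}
    (hW : IsValuationRingOf W L) (hW' : IsValuationRingOf W' L')
    (h : W' ⊓ L.toSubring = W) : ringKrullDim W ≤ ringKrullDim W' := by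
  have hle : W ≤ W' := h ▸ inf_le_left
  let : Algebra W W' := (Subring.inclusion hle).toAlgebra
  have := hW.valuationRing
  have := hW'.valuationRing
  have : FaithfulSMul W W' :=
    (faithfulSMul_iff_algebraMap_injective _ _).mpr (Subring.inclusion_injective hle)
  have : IsLocalHom (algebraMap W W') := ⟨fun a ha => by
    have ha₀ : (a : E) ≠ 0 := fun e => ha.ne_zero (Subtype.ext e)
    have hinv : (a : E)⁻¹ ∈ W := h.le ⟨inv_mem_of_isUnit ha, L.inv_mem (hW.le a.2)⟩
    exact .of_mul_eq_one ⟨_, hinv⟩ (Subtype.ext (mul_inv_cancel₀ ha₀))⟩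
  exact ringKrullDim_le_of_isLocalHom

end

namespace Tower

variable {E : Type*} [Field E] {r : ℕ} (τ : Tower E r) {n : ℕ} {x : E}

/-- `t n` as an element of `D`. -/
def tD (n : ℕ) : τ.DU := ⟨τ.t n, τ.t_mem_DU n⟩

lemma tD_mem_center (n : ℕ) : τ.tD n ∈ τ.center :=
  τ.mem_center.mpr (τ.v_t_lt_one n)

lemma exists_mem_K_succ (hx : x ∈ τ.KU) (n₀ : ℕ) : ∃ n ≥ n₀, x ∈ τ.K (n + 1) := by
  obtain ⟨n, hn⟩ := τ.mem_KU.mp hx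
  exact ⟨max n n₀, le_max_right _ _, τ.K_mono (by lia) hn⟩

lemma center_le_of_frequently {Q : Ideal τ.DU} [Q.IsPrime]
    (hQ : ∀ n₀, ∃ n ≥ n₀, τ.tD n ∈ Q) : τ.center ≤ Q := by
  intro x hx
  obtain ⟨m, hm⟩ := τ.mem_DU.mp x.2
  obtain ⟨n, hn, ht⟩ := hQ m
  have hy := τ.sq_div_t_mem_D (n := n) (τ.D_mono (hn.trans n.le_succ) hm) (τ.mem_center.mp hx)
  let y : τ.DU := ⟨_, le_iSup τ.D _ hy⟩
  refine Ideal.IsPrime.mem_of_pow_mem ‹_› 2 (?_ : x ^ 2 ∈ Q)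
  rw [show x ^ 2 = y * τ.tD n from Subtype.ext (div_mul_cancel₀ _ (τ.t_ne_zero n)).symm]
  exact Q.mul_mem_left y ht

lemma isMaximal_center : τ.center.IsMaximal := by
  refine Ideal.isMaximal_iff.mpr ⟨by simp [mem_center], fun Q x hQ hx hxQ => ?_⟩
  have hv : τ.v x = 1 := τ.eq_one_of_notMem_center hx
  obtain ⟨m, hm⟩ := τ.mem_DU.mp x.2
  have hA : (x : E)⁻¹ ∈ τ.A (m + 1) :=
    inv_mem_pullback (τ.A_mono m.le_succ (τ.D_le_A m hm)) hv
  obtain ⟨N, -, hlt, hu, hw, hz⟩ := τ.exists_div_one_add_mem_D hA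
  have hu₀ : 1 + τ.t m ^ N * (x : E)⁻¹ ≠ 0 := by
    intro h
    simp [h] at hu
  have hx₀ : (x : E) ≠ 0 := by
    intro h
    simp [h] at hv
  let w : τ.DU := ⟨_, le_iSup τ.D _ hw⟩
  let z : τ.DU := ⟨_, le_iSup τ.D _ hz⟩
  have hw : w ∈ Q := by
    rw [show w = z * x from Subtype.ext ?_]
    · exact Q.mul_mem_left z hxQ
    · simp only [w, z, Subring.coe_mul]
      field_simp
  have ht : τ.tD m ^ N * z ∈ Q := hQ <| by
    rw [mem_center]
    simpa [tD, z, mul_div_assoc', hu] using hlt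
  rw [show (1 : τ.DU) = w + τ.tD m ^ N * z from Subtype.ext ?_]
  · exact Q.add_mem hw ht
  · simp only [w, z, tD, Subring.coe_add, Subring.coe_mul, Subring.coe_pow, Subring.coe_one]
    rw [mul_div_assoc', ← add_div, div_self hu₀]

lemma exists_tD_notMem {Q : Ideal τ.DU} [Q.IsPrime] (hQ : Q ≠ τ.center) :
    ∃ n₀, ∀ n ≥ n₀, τ.tD n ∉ Q := by
  by_contra! h
  exact hQ (τ.isMaximal_center.eq_of_le (Ideal.IsPrime.ne_top ‹_›)
    (τ.center_le_of_frequently h)).symm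

theorem isValuationRingOf_ofPrime {Q : Ideal τ.DU} [Q.IsPrime] (hQ : Q ≠ τ.center) :
    IsValuationRingOf (LocalSubring.ofPrime τ.DU Q).toSubring τ.KU where
  le := ofPrime_le τ.DU_le_KU Q
  mem_or_inv_mem x hx := by
    obtain ⟨n₀, hn₀⟩ := τ.exists_tD_notMem hQ
    obtain ⟨n, hn, hxn⟩ := τ.exists_mem_K_succ hx n₀
    obtain ⟨a, ha, b, hb, j, N, -, rfl, h⟩ := τ.exists_eq_div hxn
    let a' : τ.DU := ⟨a, le_iSup τ.D _ ha⟩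
    let b' : τ.DU := ⟨b, le_iSup τ.D _ hb⟩
    by_cases hbQ : b' ∈ Q
    · by_cases haQ : a' ∈ Q
      · refine absurd (Ideal.IsPrime.mem_of_pow_mem ‹_› j ?_) (hn₀ n hn)
        rw [← show b' + τ.tD n ^ N * a' = τ.tD n ^ j from Subtype.ext h]
        exact Q.add_mem hbQ (Q.mul_mem_left _ haQ)
      · exact .inr (mem_ofPrime.mpr ⟨b', a', haQ, inv_div a b⟩)
    · exact .inl (mem_ofPrime.mpr ⟨a', b', hbQ, rfl⟩)

lemma center_ne_bot : τ.center ≠ ⊥ := by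
  intro h
  have := τ.tD_mem_center 0
  rw [h, Ideal.mem_bot] at this
  exact τ.t_ne_zero 0 (congr_arg Subtype.val this)

/-- The ideal of the `d ∈ D` with `d * x ∈ D`. -/
def conductor (x : E) : Ideal τ.DU where
  carrier := {d | d * x ∈ τ.DU}
  zero_mem' := by simp
  add_mem' {a b} ha hb := by simpa [add_mul] using add_mem ha hb
  smul_mem' a b hb := by simpa [mul_assoc] using mul_mem a.2 hb

lemma mem_DU_of_center_le_radical_conductor (hx : x ∈ τ.KU)
    (h : τ.center ≤ (τ.conductor x).radical) : x ∈ τ.DU := by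
  obtain ⟨n, hn⟩ := τ.mem_KU.mp hx
  obtain ⟨j, hj⟩ := h (τ.tD_mem_center n)
  replace hj : τ.t n ^ j * x ∈ τ.DU := hj
  have hB : τ.t n ^ j * x ∈ τ.B n := (τ.mem_D_of_mem_DU
    (mul_mem (pow_mem (τ.t_mem_K n) j) (τ.K_mono n.le_succ hn)) hj).1
  refine le_iSup τ.D n (τ.mem_D_of_mem_B hn ?_)
  convert! mul_mem (pow_mem (τ.T_mem_B n) j) hB using 1
  rw [← mul_assoc, ← mul_pow, t, mul_inv_cancel₀ (τ.T_ne_zero n), one_pow, one_mul]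

theorem mem_DU_of_forall_mem_ofPrime (h : ∀ (Q : Ideal τ.DU) [Q.IsPrime], Q ≠ τ.center →
    x ∈ (LocalSubring.ofPrime τ.DU Q).toSubring) : x ∈ τ.DU := by
  refine τ.mem_DU_of_center_le_radical_conductor
    (ofPrime_le τ.DU_le_KU ⊥ (h ⊥ τ.center_ne_bot.symm)) ?_
  rw [Ideal.radical_eq_sInf]
  refine le_sInf fun Q ⟨hQ, hprime⟩ => ?_
  by_contra hne
  obtain ⟨a, b, hb, rfl⟩ := mem_ofPrime.mp (h Q fun e => hne e.ge)
  refine hb (hQ (show (b : E) * (a / b) ∈ τ.DU from ?_))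
  rw [mul_div_cancel₀]
  · exact a.2
  · rintro hb₀
    exact hb (by rw [show b = 0 from Subtype.ext hb₀]; exact Q.zero_mem)

theorem ofPrime_center : (LocalSubring.ofPrime τ.DU τ.center).toSubring = τ.AU := by
  ext x
  rw [mem_ofPrime, mem_AU]
  constructor
  · rintro ⟨a, b, hb, rfl⟩
    obtain ⟨m, hm⟩ := τ.mem_DU.mp a.2
    obtain ⟨n, hn⟩ := τ.mem_DU.mp b.2
    refine ⟨max m n, ?_⟩
    rw [div_eq_mul_inv]
    exact mul_mem (τ.A_mono (le_max_left m n) (τ.D_le_A m hm)) (inv_mem_pullback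
      (τ.A_mono (le_max_right m n) (τ.D_le_A n hn)) (τ.eq_one_of_notMem_center hb))
  · rintro ⟨n, hn⟩
    obtain ⟨N, -, -, hv, hw, hz⟩ := τ.exists_div_one_add_mem_D (τ.A_mono n.le_succ hn)
    refine ⟨⟨_, le_iSup τ.D _ hz⟩, ⟨_, le_iSup τ.D _ hw⟩, by simp [mem_center, hv], ?_⟩
    have : 1 + τ.t n ^ N * x ≠ 0 := by
      intro h
      simp [h] at hv
    rw [div_div_div_cancel_right₀ this, div_one]

lemma center_le_of_ne_bot {P : Ideal τ.DU} [P.IsPrime] (hP : P ≤ τ.center) (h : P ≠ ⊥) :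
    τ.center ≤ P := by
  obtain ⟨p, hp, hp₀⟩ := Submodule.exists_mem_ne_zero_of_ne_bot h
  have hp₀ : (p : E) ≠ 0 := fun e => hp₀ (Subtype.ext e)
  intro x hx
  obtain ⟨N, hN⟩ := exists_pow_mul_lt_one (τ.mem_center.mp hx) (p : E)⁻¹
  replace hN := hN N le_rfl
  rw [← div_eq_mul_inv] at hN
  have hK : (x : E) ^ N / p ∈ τ.KU := div_mem (pow_mem (τ.DU_le_KU x.2) N) (τ.DU_le_KU p.2)
  obtain ⟨n, hn⟩ := τ.mem_KU.mp hK
  have hA : (x : E) ^ N / p ∈ τ.AU := le_iSup τ.A n (τ.mem_A_of_lt hn hN)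
  rw [← ofPrime_center, mem_ofPrime] at hA
  obtain ⟨a, b, hb, e⟩ := hA
  have hb₀ : (b : E) ≠ 0 := fun e => hb (by
    rw [show b = 0 from Subtype.ext e]
    exact τ.center.zero_mem)
  rw [div_eq_div_iff hp₀ hb₀] at e
  have : x ^ N * b ∈ P := by
    rw [show x ^ N * b = a * p from Subtype.ext e]
    exact P.mul_mem_left a hp
  exact Ideal.IsPrime.mem_of_pow_mem ‹_› N ((Ideal.IsPrime.mem_or_mem ‹_› this).resolve_right
    fun h => hb (hP h))

lemma height_center_le_one : τ.center.height ≤ 1 := by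
  refine (Ideal.height_le_iff (n := 1)).mpr fun P _ hP => ?_
  have : P = ⊥ := by
    by_contra h
    exact hP.not_ge (τ.center_le_of_ne_bot hP.le h)
  simp [this]

end Tower

section

variable {E : Type*} [Field E]

lemma isValuationRingOf_toSubring (L : Subfield E) : IsValuationRingOf L.toSubring L :=
  ⟨le_rfl, fun _ hx => .inl hx⟩

lemma kroneckerRing_le_closure {D : Subring E} {L : Subfield E} {T : E} (hD : D ≤ L.toSubring) :
    kroneckerRing D L T ≤ (Subfield.closure ((L : Set E) ∪ {T})).toSubring := fun _ hx =>
  nagata_le_closure le_rfl (mem_kroneckerRing.mp hx _ ⟨hD, isValuationRingOf_toSubring L⟩)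

theorem ringKrullDim_le_inf_of_kroneckerRing_le {D W : Subring E} {L : Subfield E} {T : E}
    (hW : IsValuationRingOf W (Subfield.closure ((L : Set E) ∪ {T})))
    (hDW : kroneckerRing D L T ≤ W) :
    ringKrullDim W ≤ ringKrullDim ↥(W ⊓ L.toSubring) := by
  have hle : W ⊓ L.toSubring ≤ W := inf_le_left
  refine ringKrullDim_le_of_forall_associated (Subring.inclusion hle) fun x => ?_
  by_cases hx : (x : E) = 0
  · exact ⟨0, by rw [map_zero, show x = 0 from Subtype.ext hx]⟩
  obtain ⟨y, hyL, hy, hxy, hyx⟩ := exists_sameIdeal_of_kroneckerRing_le hW hDW (hW.le x.2) hx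
  have hyW : y ∈ W := div_mul_cancel₀ y hx ▸ mul_mem hyx x.2
  refine ⟨⟨y, hyW, hyL⟩, .mkOfMulEqOne ⟨_, hxy⟩ ⟨_, hyx⟩ (Subtype.ext ?_), Subtype.ext ?_⟩
  · exact (div_mul_div_cancel₀ hy).trans (div_self hx)
  · exact mul_div_cancel₀ (x : E) hy

end

namespace Tower

variable {E : Type*} [Field E] {r : ℕ} (τ : Tower E r) {n : ℕ} {x : E} {W : Subring E}

lemma k_le_A (n : ℕ) : (τ.k n).toSubring ≤ τ.A n := fun c hc =>
  mem_pullback_of_mem (τ.k_le n hc) hc (τ.v_le_one n c hc)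

lemma B_le_of_mem (hW : τ.D (n + 1) ≤ W) (hT : τ.T n ∈ W) : τ.B n ≤ W := by
  intro b hb
  have hbK : b ∈ τ.K (n + 1) := τ.K_succ n ▸ kroneckerRing_le_closure (τ.D_le_K n) hb
  obtain ⟨N, hN⟩ := τ.exists_pow_t_mul_mem_D hb hbK
  convert! mul_mem (pow_mem hT N) (hW (hN N le_rfl)) using 1
  rw [t, inv_pow, mul_inv_cancel_left₀ (pow_ne_zero N (τ.T_ne_zero n))]

lemma k_le_of_notMem (hW : W ∈ valuationOverrings (τ.D (n + 1)) (τ.K (n + 1)))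
    (hT : τ.T n ∉ W) : (τ.k (n + 1)).toSubring ≤ W := by
  intro c hc
  have := hW.2.valuationRing
  obtain ⟨N, hN, -, hv, hw, hu⟩ := τ.exists_div_one_add_mem_D (τ.k_le_A _ hc)
  have hne : 1 + τ.t n ^ N * c ≠ 0 := by
    intro h
    simp [h] at hv
  let t : W := ⟨τ.t n, hW.1 (τ.t_mem_D n)⟩
  let w : W := ⟨_, hW.1 hw⟩
  let u : W := ⟨_, hW.1 hu⟩
  have hsum : w + t ^ N * u = 1 := Subtype.ext <| by
    simp only [w, t, u, Subring.coe_add, Subring.coe_mul, Subring.coe_pow, Subring.coe_one]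
    rw [mul_div_assoc', ← add_div, div_self hne]
  rcases IsLocalRing.isUnit_or_isUnit_of_add_one hsum with h | h
  · convert! mul_mem u.2 (inv_mem_of_isUnit h) using 1
    simp only [w, u, one_div, inv_inv, div_mul_cancel₀ c hne]
  · have ht : IsUnit t := (isUnit_pow_iff hN).mp (isUnit_of_mul_isUnit_left h)
    exact absurd (inv_inv (τ.T n) ▸ inv_mem_of_isUnit ht) hT

theorem ringKrullDim_le_of_mem_valuationOverrings
    (hW : W ∈ valuationOverrings (τ.D n) (τ.K n)) : ringKrullDim W ≤ r := by
  induction n generalizing W with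
  | zero => exact τ.ringKrullDim_le 0 W hW.2 ((τ.k_le_A 0).trans hW.1)
  | succ n ih =>
    by_cases hT : τ.T n ∈ W
    · refine (ringKrullDim_le_inf_of_kroneckerRing_le (τ.K_succ n ▸ hW.2)
        (τ.B_le_of_mem hW.1 hT)).trans (ih ⟨?_, hW.2.inf (τ.K_mono n.le_succ)⟩)
      exact le_inf ((τ.D_mono n.le_succ).trans hW.1) (τ.D_le_K n)
    · exact τ.ringKrullDim_le _ W hW.2 (τ.k_le_of_notMem hW hT)

theorem ringKrullDim_le_of_mem_valuationOverrings_DU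
    (hW : W ∈ valuationOverrings τ.DU τ.KU) : ringKrullDim W ≤ r := by
  rw [hW.2.eq_iSup τ.K_mono]
  refine ringKrullDim_iSup_le ?_ fun n =>
    τ.ringKrullDim_le_of_mem_valuationOverrings ⟨?_, hW.2.inf (le_iSup τ.K n)⟩
  · exact Monotone.directed_le fun m n h => inf_le_inf_left W (τ.K_mono h)
  · exact le_inf ((le_iSup τ.D n).trans hW.1) (τ.D_le_K n)

theorem ringKrullDim_DU_le (hr : 1 ≤ r) : ringKrullDim τ.DU ≤ r := by
  refine (ringKrullDim_le_iff_height_le _).mpr fun Q _ => ?_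
  by_cases hQ : Q = τ.center
  · rw [hQ]
    exact_mod_cast τ.height_center_le_one.trans (by exact_mod_cast hr)
  · rw [← IsLocalization.AtPrime.ringKrullDim_eq_height Q
      (LocalSubring.ofPrime τ.DU Q).toSubring]
    exact τ.ringKrullDim_le_of_mem_valuationOverrings_DU
      ⟨LocalSubring.le_ofPrime τ.DU Q, τ.isValuationRingOf_ofPrime hQ⟩

/-- The iterated Nagata rings `W(T 0)(T 1)⋯(T (n - 1))`, used to extend a valuation ring `W` of
`K 0` to a valuation overring of `D n`. -/
def iteratedNagata (W : Subring E) : ℕ → Subring E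
  | 0 => W
  | n + 1 => nagata (iteratedNagata W n) (τ.T n)

lemma iteratedNagata_mem_valuationOverrings (hW : W ∈ valuationOverrings (τ.D 0) (τ.K 0))
    (n : ℕ) : τ.iteratedNagata W n ∈ valuationOverrings (τ.D n) (τ.K n) := by
  induction n with
  | zero => exact hW
  | succ n ih =>
    exact ⟨fun x hx => mem_kroneckerRing.mp hx.1 _ ih, τ.K_succ n ▸ ih.2.nagata (τ.T n)⟩

lemma iteratedNagata_mono (W : Subring E) : Monotone (τ.iteratedNagata W) :=
  monotone_nat_of_le_succ fun _ => le_nagata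

lemma mem_of_mem_iteratedNagata (hW : W ∈ valuationOverrings (τ.D 0) (τ.K 0)) (hx : x ∈ τ.K 0)
    (h : x ∈ τ.iteratedNagata W n) : x ∈ W := by
  induction n with
  | zero => exact h
  | succ n ih =>
    exact ih (mem_of_mem_nagata (τ.iteratedNagata_mem_valuationOverrings hW n).2.le
      (τ.transcendental n) (τ.K_mono n.zero_le hx) h)

/-- The union of the rings `iteratedNagata W n`. -/
def iteratedNagataU (W : Subring E) : Subring E := ⨆ n, τ.iteratedNagata W n

lemma mem_iteratedNagataU : x ∈ τ.iteratedNagataU W ↔ ∃ n, x ∈ τ.iteratedNagata W n :=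
  Subring.mem_iSup_of_directed (τ.iteratedNagata_mono W).directed_le

lemma iteratedNagataU_mem_valuationOverrings (hW : W ∈ valuationOverrings (τ.D 0) (τ.K 0)) :
    τ.iteratedNagataU W ∈ valuationOverrings τ.DU τ.KU := by
  have h := τ.iteratedNagata_mem_valuationOverrings hW
  refine ⟨iSup_mono fun n => (h n).1, fun x hx => ?_, fun x hx => ?_⟩
  · obtain ⟨n, hn⟩ := τ.mem_iteratedNagataU.mp hx
    exact τ.mem_KU.mpr ⟨n, (h n).2.le hn⟩
  obtain ⟨n, hn⟩ := τ.mem_KU.mp hx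
  exact ((h n).2.mem_or_inv_mem x hn).imp (fun hx => le_iSup (τ.iteratedNagata W) n hx)
    (fun hx => le_iSup (τ.iteratedNagata W) n hx)

lemma iteratedNagataU_inf (hW : W ∈ valuationOverrings (τ.D 0) (τ.K 0)) :
    τ.iteratedNagataU W ⊓ (τ.K 0).toSubring = W := by
  refine le_antisymm (fun x ⟨hx, hK⟩ => ?_) (le_inf (le_iSup (τ.iteratedNagata W) 0) hW.2.le)
  obtain ⟨n, hn⟩ := τ.mem_iteratedNagataU.mp hx
  exact τ.mem_of_mem_iteratedNagata hW hK hn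

lemma T_mem_iteratedNagataU (W : Subring E) (n : ℕ) : τ.T n ∈ τ.iteratedNagataU W :=
  le_iSup (τ.iteratedNagata W) (n + 1) self_mem_nagata

theorem ringKrullDim_iteratedNagataU_le (hW : W ∈ valuationOverrings (τ.D 0) (τ.K 0)) :
    ringKrullDim (τ.iteratedNagataU W) ≤ ringKrullDim τ.DU := by
  have hV := τ.iteratedNagataU_mem_valuationOverrings hW
  refine ringKrullDim_le_of_forall_associated (Subring.inclusion hV.1) fun x => ?_
  obtain ⟨n, hn⟩ := τ.mem_KU.mp (hV.2.le x.2)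
  obtain ⟨a, ha, b, hb, j, N, hb₀, hx, h⟩ := τ.exists_eq_div (τ.K_mono n.le_succ hn)
  have hT := τ.T_mem_iteratedNagataU W n
  have ht : τ.t n ∈ τ.iteratedNagataU W := hV.1 (τ.t_mem_DU n)
  let b' : τ.iteratedNagataU W := ⟨b, hV.1 (le_iSup τ.D _ hb)⟩
  let c : τ.iteratedNagataU W := ⟨τ.T n ^ j * (1 + τ.t n ^ N * x),
    mul_mem (pow_mem hT j) (add_mem (one_mem _) (mul_mem (pow_mem ht N) x.2))⟩
  have hbc : b' * c = 1 := Subtype.ext <| by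
    have hT₀ := τ.T_ne_zero n
    calc b * (τ.T n ^ j * (1 + τ.t n ^ N * x))
        = τ.T n ^ j * (b + τ.t n ^ N * (x * b)) := by ring
      _ = 1 := by rw [hx, div_mul_cancel₀ a hb₀, h, t, ← mul_pow, mul_inv_cancel₀ hT₀, one_pow]
  refine ⟨⟨a, le_iSup τ.D _ ha⟩, .symm ⟨.mkOfMulEqOne b' c hbc, Subtype.ext ?_⟩⟩
  change x * b = a
  rw [hx, div_mul_cancel₀ a hb₀]

theorem exists_valuationOverring_le_ringKrullDim :
    ∃ W ∈ valuationOverrings τ.DU τ.KU, r ≤ ringKrullDim W ∧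
      ringKrullDim W ≤ ringKrullDim τ.DU := by
  obtain ⟨W, hW, hr⟩ := τ.exists_le_ringKrullDim
  have hV := τ.iteratedNagataU_mem_valuationOverrings hW
  exact ⟨_, hV, hr.trans (hW.2.ringKrullDim_le hV.2 (τ.iteratedNagataU_inf hW)),
    τ.ringKrullDim_iteratedNagataU_le hW⟩

theorem ringKrullDim_DU (hr : 1 ≤ r) : ringKrullDim τ.DU = r := by
  obtain ⟨W, -, h, h'⟩ := τ.exists_valuationOverring_le_ringKrullDim
  exact (τ.ringKrullDim_DU_le hr).antisymm (h.trans h')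

lemma mem_AU_of_lt (hx : x ∈ τ.KU) (h : τ.v x < 1) : x ∈ τ.AU := by
  obtain ⟨n, hn⟩ := τ.mem_KU.mp hx
  exact τ.mem_AU.mpr ⟨n, τ.mem_A_of_lt hn h⟩

lemma AU_le_KU : τ.AU ≤ τ.KU.toSubring :=
  iSup_le fun n => (τ.A_le_K n).trans (le_iSup τ.K n)

lemma mem_of_lt_of_ne_bot {P : Ideal τ.AU} [P.IsPrime] (hP : P ≠ ⊥) {y : τ.AU}
    (hy : τ.v y < 1) : y ∈ P := by
  obtain ⟨p, hp, hp₀⟩ := Submodule.exists_mem_ne_zero_of_ne_bot hP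
  replace hp₀ : (p : E) ≠ 0 := fun e => hp₀ (Subtype.ext e)
  obtain ⟨N, hN⟩ := exists_pow_mul_lt_one hy (p : E)⁻¹
  replace hN := hN N le_rfl
  rw [← div_eq_mul_inv] at hN
  let q : τ.AU := ⟨y ^ N / p, τ.mem_AU_of_lt
    (div_mem (pow_mem (τ.AU_le_KU y.2) N) (τ.AU_le_KU p.2)) hN⟩
  refine Ideal.IsPrime.mem_of_pow_mem ‹_› N ?_
  rw [show y ^ N = q * p from Subtype.ext (div_mul_cancel₀ _ hp₀).symm]
  exact P.mul_mem_left q hp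

lemma ofPrime_AU_le {P : Ideal τ.AU} [P.IsPrime] (hP : P ≠ ⊥) :
    (LocalSubring.ofPrime τ.AU P).toSubring ≤ τ.AU := by
  intro x hx
  obtain ⟨a, b, hb, rfl⟩ := mem_ofPrime.mp hx
  have hv : τ.v b = 1 := (τ.le_one_of_mem_AU b.2).antisymm
    (not_lt.mp fun h => hb (τ.mem_of_lt_of_ne_bot hP h))
  obtain ⟨n, hn⟩ := τ.mem_AU.mp b.2
  rw [div_eq_mul_inv]
  exact mul_mem a.2 (le_iSup τ.A n (inv_mem_pullback hn hv))

theorem eq_bot_of_isValuationRingOf_ofPrime {z : E} (hz : z ∈ τ.KU) (hzA : z ∉ τ.AU)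
    (hzA' : z⁻¹ ∉ τ.AU) {P : Ideal τ.AU} [P.IsPrime]
    (h : IsValuationRingOf (LocalSubring.ofPrime τ.AU P).toSubring τ.KU) : P = ⊥ := by
  by_contra hP
  exact (h.mem_or_inv_mem z hz).elim (fun hz => hzA (τ.ofPrime_AU_le hP hz))
    (fun hz => hzA' (τ.ofPrime_AU_le hP hz))

lemma T_mem_ofPrime_bot (n : ℕ) : τ.T n ∈ (LocalSubring.ofPrime τ.AU ⊥).toSubring := by
  refine mem_ofPrime.mpr ⟨1, ⟨τ.t n, τ.DU_le_AU (τ.t_mem_DU n)⟩, ?_, ?_⟩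
  · exact fun h => τ.t_ne_zero n (congr_arg (Subtype.val : τ.AU → E) (Ideal.mem_bot.mp h))
  · simp [t]

lemma T_notMem_AU (n : ℕ) : τ.T n ∉ τ.AU := by
  intro h
  have := τ.le_one_of_mem_AU h
  rw [v_T, ← exp_zero, exp_le_exp] at this
  lia

end Tower

section CoefficientField

variable {E : Type*} [Field E] {Γ₀ : Type*} [LinearOrderedCommGroupWithZero Γ₀]

/-- `F` is a coefficient field of the restriction of `v` to `K`: the valuation is trivial on `F`,
and every element of its valuation ring in `K` is congruent to an element of `F`. -/
structure HasCoefficientField (v : Valuation E Γ₀) (F K : Subfield E) : Prop where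
  le : F ≤ K
  le_one : ∀ c ∈ F, v c ≤ 1
  mem_pullback : ∀ x ∈ K, v x ≤ 1 → x ∈ pullback v F.toSubring K

variable {v : Valuation E Γ₀} {F K k : Subfield E} {R W : Subring E} {T x c : E}

lemma map_eq_one_of_forall_le_one (hF : ∀ c ∈ F, v c ≤ 1) (hc : c ∈ F) (hc₀ : c ≠ 0) :
    v c = 1 := by
  refine (hF c hc).antisymm ?_
  have h := hF c⁻¹ (inv_mem hc)
  rwa [map_inv₀, inv_le_one₀ (zero_lt_iff.mpr (v.ne_zero_iff.mpr hc₀))] at h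

lemma mem_of_mem_pullback (hF : ∀ c ∈ F, v c ≤ 1) (hk : k ≤ F) (hx : x ∈ F)
    (h : x ∈ pullback v k.toSubring K) : x ∈ k := by
  obtain ⟨-, c, hc, -, hlt⟩ := h
  have hxc : x - c = 0 := by
    by_contra h₀
    exact hlt.ne (map_eq_one_of_forall_le_one hF (sub_mem hx (hk hc)) h₀)
  exact sub_eq_zero.mp hxc ▸ hc

lemma aeval_mem_pullback (hF : ∀ c ∈ F, v c ≤ 1) (hFK : F ≤ K) (hTK : T ∈ K) (hT : v T < 1)
    (f : F[X]) : aeval T f ∈ pullback v F.toSubring K := by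
  rw [aeval_eq_sum_range]
  refine sum_mem fun i _ => ?_
  rw [Algebra.smul_def]
  exact mul_mem (mem_pullback_of_mem (hFK (f.coeff i).2) (f.coeff i).2 (hF _ (f.coeff i).2))
    (pow_mem (mem_pullback_of_lt hTK hT) i)

lemma map_aeval_eq_one (hF : ∀ c ∈ F, v c ≤ 1) (hT : v T < 1) {f : F[X]} (hf : f.coeff 0 ≠ 0) :
    v (aeval T f) = 1 := by
  have hc : v (f.coeff 0 : E) = 1 :=
    map_eq_one_of_forall_le_one hF (f.coeff 0).2 (by simpa using hf)
  have hlt : v (T * aeval T f.divX) < 1 := (map_mul v _ _).trans_lt <|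
    mul_lt_one_of_nonneg_of_lt_one_left zero_le hT <| le_one_of_mem_pullback <|
      aeval_mem_pullback (K := ⊤) hF le_top (Subfield.mem_top T) hT f.divX
  rw [← divX_mul_X_add f, map_add, map_mul, aeval_X, aeval_C, mul_comm, add_comm, ← hc]
  exact v.map_add_eq_of_lt_left (hlt.trans_eq hc.symm)

lemma exists_eq_X_pow_mul {R : Type*} [CommRing R] [IsDomain R] {f : R[X]} (hf : f ≠ 0) :
    ∃ (n : ℕ) (g : R[X]), f = X ^ n * g ∧ g.coeff 0 ≠ 0 := by
  obtain ⟨g, hg, hdvd⟩ := exists_eq_pow_rootMultiplicity_mul_and_not_dvd f hf 0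
  rw [C_0, sub_zero] at hg hdvd
  exact ⟨_, g, hg, mt X_dvd_iff.mpr hdvd⟩

lemma exists_eq_aeval_div_aeval (hF : ∀ c ∈ F, v c ≤ 1) (hT₀ : T ≠ 0) (hT : v T < 1)
    (hx : x ∈ Subfield.closure ((F : Set E) ∪ {T})) (h : v x ≤ 1) :
    ∃ f g : F[X], g.coeff 0 ≠ 0 ∧ x = aeval T f / aeval T g := by
  obtain ⟨f, g, rfl⟩ := mem_closure_union_singleton_iff.mp hx
  rcases eq_or_ne f 0 with rfl | hf
  · exact ⟨0, 1, by simp, by simp⟩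
  rcases eq_or_ne g 0 with rfl | hg
  · exact ⟨0, 1, by simp, by simp⟩
  obtain ⟨i, f₀, rfl, hf₀⟩ := exists_eq_X_pow_mul hf
  obtain ⟨j, g₀, rfl, hg₀⟩ := exists_eq_X_pow_mul hg
  have hTpos : 0 < v T := zero_lt_iff.mpr (v.ne_zero_iff.mpr hT₀)
  have hji : j ≤ i := by
    simp only [map_mul, map_pow, aeval_X, map_div₀, map_aeval_eq_one hF hT hf₀,
      map_aeval_eq_one hF hT hg₀, mul_one] at h
    rwa [div_le_one₀ (pow_pos hTpos j), pow_le_pow_iff_right_of_lt_one₀ hTpos hT] at h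
  refine ⟨X ^ (i - j) * f₀, g₀, hg₀, ?_⟩
  simp only [map_mul, map_pow, aeval_X]
  rw [pow_sub₀ T hT₀ hji, mul_div_mul_comm, ← div_eq_mul_inv, mul_div_assoc]

lemma mem_pullback_of_le_one (hF : ∀ c ∈ F, v c ≤ 1) (hT₀ : T ≠ 0) (hT : v T < 1)
    (hx : x ∈ Subfield.closure ((F : Set E) ∪ {T})) (h : v x ≤ 1) :
    x ∈ pullback v F.toSubring (Subfield.closure ((F : Set E) ∪ {T})) := by
  have hmem := aeval_mem_pullback (K := Subfield.closure ((F : Set E) ∪ {T})) hF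
    (fun c hc => Subfield.subset_closure (.inl hc)) (Subfield.subset_closure (.inr rfl)) hT
  obtain ⟨f, g, hg, rfl⟩ := exists_eq_aeval_div_aeval hF hT₀ hT hx h
  rw [div_eq_mul_inv]
  exact mul_mem (hmem f) (inv_mem_pullback (hmem g) (map_aeval_eq_one hF hT hg))

lemma mem_subringClosure_union_singleton_iff {L : Subfield E} :
    x ∈ Subring.closure ((L : Set E) ∪ {T}) ↔ ∃ f : L[X], x = aeval T f := by
  have hL : Set.range (algebraMap L E) = L := Subtype.range_coe
  rw [← hL, ← Algebra.adjoin_eq_ring_closure]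
  simp only [Subalgebra.mem_toSubring, Algebra.adjoin_singleton_eq_range_aeval, AlgHom.mem_range,
    eq_comm]

lemma exists_div_iff_le_one (hF : ∀ c ∈ F, v c ≤ 1) (hT₀ : T ≠ 0) (hT : v T < 1) :
    (∃ f ∈ Subring.closure ((F : Set E) ∪ {T}), ∃ g ∈ Subring.closure ((F : Set E) ∪ {T}),
      (¬∃ h ∈ Subring.closure ((F : Set E) ∪ {T}), g = T * h) ∧ x = f / g) ↔
    x ∈ Subfield.closure ((F : Set E) ∪ {T}) ∧ v x ≤ 1 := by
  have hle (f : F[X]) : v (aeval T f) ≤ 1 := le_one_of_mem_pullback <|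
    aeval_mem_pullback hF le_top (Subfield.mem_top T) hT f
  simp only [mem_subringClosure_union_singleton_iff]
  constructor
  · rintro ⟨_, ⟨f, rfl⟩, _, ⟨g, rfl⟩, hg, rfl⟩
    have hg₀ : g.coeff 0 ≠ 0 := fun hg₀ => by
      obtain ⟨g₁, rfl⟩ := X_dvd_iff.mpr hg₀
      exact hg ⟨_, ⟨g₁, rfl⟩, by rw [map_mul, aeval_X]⟩
    refine ⟨mem_closure_union_singleton_iff.mpr ⟨f, g, rfl⟩, ?_⟩
    rw [map_div₀, map_aeval_eq_one hF hT hg₀, div_one]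
    exact hle f
  · rintro ⟨hx, hv⟩
    obtain ⟨f, g, hg₀, rfl⟩ := exists_eq_aeval_div_aeval hF hT₀ hT hx hv
    refine ⟨_, ⟨f, rfl⟩, _, ⟨g, rfl⟩, ?_, rfl⟩
    rintro ⟨_, ⟨g₁, rfl⟩, hg⟩
    have hlt : v (T * aeval T g₁) < 1 :=
      (map_mul v _ _).trans_lt (mul_lt_one_of_nonneg_of_lt_one_left zero_le hT (hle g₁))
    exact hlt.ne (hg ▸ map_aeval_eq_one hF hT hg₀)

lemma exists_eq_mul_iff_lt_one {L : Subfield E} {v : Valuation E ℤᵐ⁰} (hTL : T ∈ L)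
    (hT : v T = exp (-1 : ℤ)) : (∃ y, (y ∈ L ∧ v y ≤ 1) ∧ x = T * y) ↔ x ∈ L ∧ v x < 1 := by
  have hlt (y : E) : v (T * y) < 1 ↔ v y ≤ 1 := by
    rw [map_mul, hT, exp_neg, inv_mul_lt_iff₀ exp_pos, mul_one, ← lt_mul_exp_iff_le one_ne_zero,
      one_mul]
  constructor
  · rintro ⟨y, ⟨hy, hvy⟩, rfl⟩
    exact ⟨mul_mem hTL hy, (hlt y).mpr hvy⟩
  · rintro ⟨hx, hv⟩
    have hT₀ : T ≠ 0 := v.ne_zero_iff.mp (hT ▸ exp_ne_zero)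
    refine ⟨T⁻¹ * x, ⟨mul_mem (inv_mem hTL) hx, ?_⟩, ?_⟩
    · rwa [← hlt, mul_inv_cancel_left₀ hT₀]
    · rw [mul_inv_cancel_left₀ hT₀]

namespace HasCoefficientField

lemma of_closure (hF : ∀ c ∈ F, v c ≤ 1) (hT₀ : T ≠ 0) (hT : v T < 1) :
    HasCoefficientField v F (Subfield.closure ((F : Set E) ∪ {T})) where
  le _ hc := Subfield.subset_closure (.inl hc)
  le_one := hF
  mem_pullback _ := mem_pullback_of_le_one hF hT₀ hT

variable (h : HasCoefficientField v F K)
include h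

lemma isValuationRingOf_pullback (hW : IsValuationRingOf W F) :
    IsValuationRingOf (pullback v W K) K where
  le := pullback_le
  mem_or_inv_mem x hx := by
    rcases lt_or_ge 1 (v x) with hv | hv
    · exact .inr (mem_pullback_of_lt (inv_mem hx) (by simpa using inv_lt_one_of_one_lt₀ hv))
    obtain ⟨-, c, hc, hvc, hxc⟩ := h.mem_pullback x hx hv
    rcases eq_or_ne c 0 with rfl | hc₀
    · exact .inl ⟨hx, 0, W.zero_mem, hvc, hxc⟩
    refine (hW.mem_or_inv_mem c hc).imp (fun hcW => ⟨hx, c, hcW, hvc, hxc⟩) fun hcW => ?_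
    have hvc := map_eq_one_of_forall_le_one h.le_one hc hc₀
    exact ⟨inv_mem hx, c⁻¹, hcW, by simp [hvc], map_inv_sub_inv_lt_one hvc hxc⟩

lemma ringKrullDim_add_one_le (hW : W ≤ F.toSubring) {t : E} (htK : t ∈ K) (ht₀ : t ≠ 0)
    (ht : v t < 1) : ringKrullDim W + 1 ≤ ringKrullDim (pullback v W K) := by
  let 𝔪 := valuationCenter v (pullback v W K) fun _ hx => le_one_of_mem_pullback hx
  let f : W →+* pullback v W K := Subring.inclusion fun c hc =>
    mem_pullback_of_mem (h.le (hW hc)) hc (h.le_one c (hW hc))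
  have hbij : Function.Bijective ((Ideal.Quotient.mk 𝔪).comp f) := by
    constructor
    · refine (injective_iff_map_eq_zero _).mpr fun c hc => ?_
      by_contra hc₀
      have hmem : f c ∈ 𝔪 := Ideal.Quotient.eq_zero_iff_mem.mp hc
      exact (mem_valuationCenter.mp hmem).ne <| map_eq_one_of_forall_le_one h.le_one (hW c.2)
        fun h₀ => hc₀ (Subtype.ext h₀)
    · intro y
      obtain ⟨⟨x, hx, c, hc, -, hxc⟩, rfl⟩ := Ideal.Quotient.mk_surjective y
      refine ⟨⟨c, hc⟩, Ideal.Quotient.eq.mpr (mem_valuationCenter.mpr ?_)⟩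
      exact (v.map_sub_swap c x).trans_lt hxc
  rw [ringKrullDim_eq_of_ringEquiv (RingEquiv.ofBijective _ hbij)]
  refine ringKrullDim_succ_le_of_surjective _ Ideal.Quotient.mk_surjective
    (r := ⟨t, mem_pullback_of_lt htK ht⟩) (mem_nonZeroDivisors_of_ne_zero ?_) ?_
  · simpa using ht₀
  · exact Ideal.Quotient.eq_zero_iff_mem.mpr (mem_valuationCenter.mpr ht)

lemma mem_pullback_of_forall (hk : k ≤ F)
    (hkF : ∀ x ∈ F, (∀ W ∈ valuationOverrings k.toSubring F, x ∈ W) → x ∈ k) (hx : x ∈ K)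
    (hxW : ∀ W ∈ valuationOverrings (pullback v k.toSubring K) K, x ∈ W) :
    x ∈ pullback v k.toSubring K := by
  have hmem : ∀ W ∈ valuationOverrings k.toSubring F, x ∈ pullback v W K := fun W hW =>
    hxW _ ⟨pullback_mono hW.1 le_rfl, h.isValuationRingOf_pullback hW.2⟩
  obtain ⟨-, c, hc, hvc, hxc⟩ := hmem F.toSubring ⟨hk, isValuationRingOf_toSubring F⟩
  refine ⟨hx, c, hkF c hc fun W hW => ?_, hvc, hxc⟩
  obtain ⟨-, d, hd, -, hxd⟩ := hmem W hW
  suffices c = d by rwa [this]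
  by_contra hcd
  refine (map_eq_one_of_forall_le_one h.le_one (sub_mem hc (hW.2.le hd))
    (sub_ne_zero.mpr hcd)).not_lt ?_
  rw [← sub_sub_sub_cancel_left d c x]
  exact v.map_sub_lt hxd hxc

end HasCoefficientField

end CoefficientField

section RationalFunctionField

variable {E : Type*} [Field E] {L k F : Subfield E} {T x : E}

lemma mem_adjoin_iff_mem_closure {s : Set E} :
    x ∈ IntermediateField.adjoin L s ↔ x ∈ Subfield.closure ((L : Set E) ∪ s) := by
  rw [← IntermediateField.mem_toSubfield, IntermediateField.adjoin_toSubfield]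
  congr! 3
  exact (Subtype.range_coe (s := (L : Set E)))

lemma closure_union_add_singleton_le {c : E} (hc : c ∈ L) :
    Subfield.closure ((L : Set E) ∪ {c + x}) ≤ Subfield.closure ((L : Set E) ∪ {x}) := by
  refine Subfield.closure_le.mpr (Set.union_subset (fun y hy => ?_) ?_)
  · exact Subfield.subset_closure (.inl hy)
  · exact Set.singleton_subset_iff.mpr
      (add_mem (Subfield.subset_closure (.inl hc)) (Subfield.subset_closure (.inr rfl)))

lemma closure_union_add_singleton {c : E} (hc : c ∈ L) :
    Subfield.closure ((L : Set E) ∪ {c + x}) = Subfield.closure ((L : Set E) ∪ {x}) := by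
  refine le_antisymm (closure_union_add_singleton_le hc) ?_
  simpa using closure_union_add_singleton_le (x := c + x) (neg_mem hc)

lemma transcendental_add {c : E} (hc : c ∈ L) (hT : Transcendental L T) :
    Transcendental L (c + T) := fun h => hT <| by
  rw [← add_sub_cancel_left c T]
  exact h.sub (isAlgebraic_algebraMap (⟨c, hc⟩ : L))

lemma exists_valuation (hT : Transcendental L T) (h : Subfield.closure ((L : Set E) ∪ {T}) = ⊤) :
    ∃ v : Valuation E ℤᵐ⁰, (∀ c ∈ L, v c ≤ 1) ∧ v T = exp (-1 : ℤ) := by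
  have htop : IntermediateField.adjoin L {T} = ⊤ := by
    refine _root_.eq_top_iff.mpr fun x _ => ?_
    rw [mem_adjoin_iff_mem_closure, h]
    trivial
  let e : RatFunc L ≃ₐ[L] E := (RatFunc.algEquivOfTranscendental T hT).trans
    ((IntermediateField.equivOfEq htop).trans IntermediateField.topEquiv)
  have heX : e.symm T = RatFunc.X := by
    rw [AlgEquiv.symm_apply_eq]
    simp [e]
  refine ⟨((Polynomial.idealX L).valuation (RatFunc L)).comap (e.symm : E →+* RatFunc L),
    fun c hc => ?_, ?_⟩
  · have hec : e.symm c = algebraMap L[X] (RatFunc L) (C ⟨c, hc⟩) := by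
      rw [← algebraMap_eq, ← IsScalarTower.algebraMap_apply]
      exact e.symm.commutes ⟨c, hc⟩
    simpa [Valuation.comap_apply, hec] using
      (Polynomial.idealX L).valuation_le_one (K := RatFunc L) (C ⟨c, hc⟩)
  · simp [Valuation.comap_apply, heX, Polynomial.valuation_X_eq_neg_one]

lemma mem_of_isAlgebraic (hT : Transcendental L T)
    (hx : x ∈ Subfield.closure ((L : Set E) ∪ {T})) (h : IsAlgebraic L x) : x ∈ L := by
  let e := RatFunc.algEquivOfTranscendental T hT
  let y : IntermediateField.adjoin L {T} := ⟨x, mem_adjoin_iff_mem_closure.mpr hx⟩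
  by_contra hxL
  refine RatFunc.transcendental_of_ne_C (e.symm y) ?_ ?_
  · rintro ⟨c, hc⟩
    have hyc : y = algebraMap L _ c := by
      rw [← e.commutes, ← e.symm_apply_eq, hc]
      exact (RatFunc.algebraMap_eq_C (K := L) ▸ rfl)
    rw [show x = c from congr_arg Subtype.val hyc] at hxL
    exact hxL c.2
  · exact (isAlgebraic_algHom_iff e.symm.toAlgHom e.symm.injective).mpr <|
      (isAlgebraic_algHom_iff (IntermediateField.val _) Subtype.val_injective).mp h

lemma mem_of_forall_mem_valuationOverrings (hk : k ≤ F) (halg : ∀ x ∈ F, IsAlgebraic k x → x ∈ k)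
    (hx : x ∈ F) (h : ∀ W ∈ valuationOverrings k.toSubring F, x ∈ W) : x ∈ k := by
  by_contra hxk
  let R : Subring F := k.toSubring.comap F.subtype
  have : IsIntegrallyClosedIn R F := by
    refine Subring.isIntegrallyClosedIn_iff.mpr fun y hy => halg y y.2 ?_
    let g : R →+* k :=
      (F.subtype.comp R.subtype).codRestrict k fun c => c.2
    exact (hy.map_of_comp_eq g F.subtype rfl).isAlgebraic
  obtain ⟨V, hRV, hxV⟩ :=
    Subring.exists_le_valuationSubring_of_isIntegrallyClosedIn (R := R) (x := ⟨x, hx⟩) hxk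
  refine hxV ?_
  have := h (V.toSubring.map F.subtype) ⟨fun c hc => ⟨⟨c, hk hc⟩, hRV hc, rfl⟩, ?_, ?_⟩
  · obtain ⟨y, hy, rfl⟩ := this
    exact hy
  · rintro _ ⟨y, -, rfl⟩
    exact y.2
  · intro y hy
    exact (V.mem_or_inv_mem ⟨y, hy⟩).imp (fun h => ⟨_, h, rfl⟩) fun h => ⟨_, h, rfl⟩

lemma trdeg_adjoin_le_cardinalMk {k E : Type*} [Field k] [Field E] [Algebra k E] (s : Set E) :
    Algebra.trdeg k (IntermediateField.adjoin k s) ≤ Cardinal.mk s := by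
  let s' : Set (IntermediateField.adjoin k s) := Subtype.val ⁻¹' s
  have hs' : Subtype.val '' s' = s :=
    Set.image_preimage_eq_of_subset fun x hx =>
      ⟨⟨x, IntermediateField.subset_adjoin k s hx⟩, rfl⟩
  have htop : IntermediateField.adjoin k s' = ⊤ := IntermediateField.lift_injective _ <| by
    rw [IntermediateField.lift_adjoin, hs', IntermediateField.lift_top]
  have : Algebra.IsAlgebraic (Algebra.adjoin k s') (IntermediateField.adjoin k s) := by
    rw [← IntermediateField.isAlgebraic_adjoin_iff_top, htop]
    exact ⟨fun x => isAlgebraic_algebraMap (⟨x, trivial⟩ : (⊤ : IntermediateField _ _))⟩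
  exact (Algebra.IsAlgebraic.trdeg_le_cardinalMk k s').trans
    (Cardinal.mk_preimage_of_injective _ _ Subtype.val_injective)

lemma ringKrullDim_le_ncard {W : Subring E} {s : Set E} (hs : s.Finite) (hkW : k.toSubring ≤ W)
    (hW : W ≤ (Subfield.closure ((k : Set E) ∪ s)).toSubring) : ringKrullDim W ≤ s.ncard := by
  let : Algebra k W := (Subring.inclusion hkW).toAlgebra
  let f : W →ₐ[k] IntermediateField.adjoin k s :=
    { toFun x := ⟨x, mem_adjoin_iff_mem_closure.mpr (hW x.2)⟩
      map_one' := rfl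
      map_mul' _ _ := rfl
      map_zero' := rfl
      map_add' _ _ := rfl
      commutes' _ := rfl }
  refine ringKrullDim_le_of_trdeg_le (k := k) <|
    (trdeg_le_of_injective f fun x y h => ?_).trans ((trdeg_adjoin_le_cardinalMk s).trans ?_)
  · exact Subtype.ext (congr_arg Subtype.val h :)
  · exact (Set.cast_ncard hs).ge

end RationalFunctionField

section VarField

variable {ι 𝕜 E : Type*} [Field 𝕜] [Field E] [Algebra 𝕜 E] {x : ι → E} {S S' t : Set ι} {i : ι}
  {y : E}

lemma closure_closure_union (s t : Set E) :
    Subfield.closure ((Subfield.closure s : Set E) ∪ t) = Subfield.closure (s ∪ t) := by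
  rw [Subfield.closure_union, Subfield.closure_eq, ← Subfield.closure_union]

lemma closure_iSup_union {κ : Type*} [Nonempty κ] (L : κ → Subfield E) (s : Set E) :
    Subfield.closure (((⨆ i, L i : Subfield E) : Set E) ∪ s) =
      ⨆ i, Subfield.closure ((L i : Set E) ∪ s) := by
  simp only [Subfield.closure_union, Subfield.closure_eq, iSup_sup]

variable (𝕜 x S) in
/-- The subfield `𝕜(xᵢ : i ∈ S)` of `E`. It is a `Subfield` rather than an `IntermediateField`
so that it can be enlarged by further variables without changing the base field. -/
def varField : Subfield E := Subfield.closure (Set.range (algebraMap 𝕜 E) ∪ x '' S)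

lemma varField_mono (h : S ⊆ S') : varField 𝕜 x S ≤ varField 𝕜 x S' :=
  Subfield.closure_mono (Set.union_subset_union_right _ (Set.image_mono h))

lemma mem_varField (hi : i ∈ S) : x i ∈ varField 𝕜 x S :=
  Subfield.subset_closure (.inr (Set.mem_image_of_mem x hi))

variable (𝕜 x S S') in
lemma closure_varField_union_image :
    Subfield.closure ((varField 𝕜 x S : Set E) ∪ x '' S') = varField 𝕜 x (S ∪ S') := by
  rw [varField, varField, closure_closure_union, Set.union_assoc, ← Set.image_union]

variable (𝕜 x S i) in
lemma closure_varField_union_singleton :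
    Subfield.closure ((varField 𝕜 x S : Set E) ∪ {x i}) = varField 𝕜 x (insert i S) := by
  rw [← Set.image_singleton, closure_varField_union_image, Set.union_singleton]

variable (hx : AlgebraicIndependent 𝕜 x)
include hx

lemma transcendental_varField (hi : i ∉ S) : Transcendental (varField 𝕜 x S) (x i) :=
  IntermediateField.transcendental_adjoin_iff.mpr (hx.transcendental_adjoin hi)

lemma notMem_varField (hi : i ∉ S) : x i ∉ varField 𝕜 x S := fun h =>
  transcendental_varField hx hi (isAlgebraic_algebraMap (⟨x i, h⟩ : varField 𝕜 x S))

lemma mem_varField_of_isAlgebraic (ht : t.Finite) (hy : y ∈ varField 𝕜 x (S ∪ t))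
    (h : IsAlgebraic (varField 𝕜 x S) y) : y ∈ varField 𝕜 x S := by
  induction t, ht using Set.Finite.induction_on with
  | empty => rwa [Set.union_empty] at hy
  | @insert i t _ _ ih =>
    rw [Set.union_insert] at hy
    by_cases hi : i ∈ S ∪ t
    · exact ih (by rwa [Set.insert_eq_of_mem hi] at hy)
    refine ih (mem_of_isAlgebraic (transcendental_varField hx hi) ?_ ?_)
    · rwa [closure_varField_union_singleton]
    · contrapose! h
      exact transcendental_of_le (W := (varField 𝕜 x S).toSubring)
        (varField_mono Set.subset_union_left) h

lemma exists_valuation_varField (htop : varField 𝕜 x Set.univ = ⊤) (i : ι) :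
    ∃ v : Valuation E ℤᵐ⁰, (∀ c ∈ varField 𝕜 x {i}ᶜ, v c ≤ 1) ∧ v (x i) = exp (-1 : ℤ) := by
  refine exists_valuation (transcendental_varField hx (by simp)) ?_
  rw [closure_varField_union_singleton, ← htop, Set.insert_eq, Set.union_compl_self]

-- Compose the `xᵢ`-adic valuations, `i ∈ t`, one after the other.
lemma exists_ncard_le_ringKrullDim (htop : varField 𝕜 x Set.univ = ⊤) (ht : t.Finite)
    (hSt : Disjoint S t) : ∃ W, IsValuationRingOf W (varField 𝕜 x (S ∪ t)) ∧
      (varField 𝕜 x S).toSubring ≤ W ∧ t.ncard ≤ ringKrullDim W := by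
  induction t, ht using Set.Finite.induction_on with
  | empty =>
    refine ⟨(varField 𝕜 x S).toSubring, ?_, le_rfl, ?_⟩
    · rw [Set.union_empty]
      exact isValuationRingOf_toSubring _
    · simpa using ringKrullDim_nonneg_of_nontrivial
  | @insert i t hi ht ih =>
    obtain ⟨hiS, hSt⟩ := Set.disjoint_insert_right.mp hSt
    obtain ⟨W, hW, hSW, hdim⟩ := ih hSt
    have hiSt : i ∉ S ∪ t := fun h => h.elim hiS hi
    obtain ⟨v, hv, hvi⟩ := exists_valuation_varField hx htop i
    have hvi_lt : v (x i) < 1 := by rw [hvi, ← exp_zero, exp_lt_exp]; simp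
    have hvF : ∀ c ∈ varField 𝕜 x (S ∪ t), v c ≤ 1 := fun c hc =>
      hv c (varField_mono (Set.subset_compl_singleton_iff.mpr hiSt) hc)
    have hx₀ : x i ≠ 0 := ne_zero_of_transcendental (transcendental_varField hx hiS)
    have h := HasCoefficientField.of_closure hvF hx₀ hvi_lt
    rw [closure_varField_union_singleton, ← Set.union_insert] at h
    refine ⟨_, h.isValuationRingOf_pullback hW, fun c hc => ?_, ?_⟩
    · exact mem_pullback_of_mem (h.le (hW.le (hSW hc))) (hSW hc) (hvF c (hW.le (hSW hc)))
    · rw [Set.ncard_insert_of_notMem hi ht]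
      push_cast
      exact (add_le_add_left hdim 1).trans (h.ringKrullDim_add_one_le hW.le
        (mem_varField (.inr (Set.mem_insert i t))) hx₀ hvi_lt)

end VarField

section Concrete

variable (k0 : Type) [Field k0] (r : ℕ)

/-- The indeterminates, as a family in the ambient field. -/
noncomputable def vars (j : TowerVars r) : Amb k0 r :=
  algebraMap (MvPolynomial (TowerVars r) k0) (Amb k0 r) (MvPolynomial.X j)

/-- The indices of the indeterminates `X₁, …, Xₙ`. -/
def idxX (n : ℕ) : Set (TowerVars r) := Sum.inl '' Set.Icc 1 n

/-- The index of the indeterminate `Y`. -/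
def idxY : TowerVars r := Sum.inr (Sum.inl ())

/-- The indices of the indeterminates `Z₁, …, Z_{r-1}`. -/
def idxZ : Set (TowerVars r) := Set.range (Sum.inr ∘ Sum.inr)

lemma algebraicIndependent_vars : AlgebraicIndependent k0 (vars k0 r) :=
  (MvPolynomial.algebraicIndependent_X (TowerVars r) k0).map'
    (f := IsScalarTower.toAlgHom k0 (MvPolynomial (TowerVars r) k0) (Amb k0 r))
    (IsFractionRing.injective _ _)

lemma varField_vars_univ : varField k0 (vars k0 r) Set.univ = ⊤ := by
  have hmem (p : MvPolynomial (TowerVars r) k0) :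
      algebraMap _ (Amb k0 r) p ∈ varField k0 (vars k0 r) Set.univ := by
    induction p using MvPolynomial.induction_on with
    | C c => exact Subfield.subset_closure (.inl ⟨c, IsScalarTower.algebraMap_apply k0 _ _ c⟩)
    | add p q hp hq => exact map_add (algebraMap _ (Amb k0 r)) p q ▸ add_mem hp hq
    | mul_X p j hp =>
      exact map_mul (algebraMap _ (Amb k0 r)) p _ ▸ mul_mem hp (mem_varField (Set.mem_univ j))
  refine _root_.eq_top_iff.mpr fun x _ => ?_
  obtain ⟨p, q, -, rfl⟩ := IsFractionRing.div_surjective (A := MvPolynomial (TowerVars r) k0) x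
  exact div_mem (hmem p) (hmem q)

lemma finite_idxZ : (idxZ r).Finite := Set.finite_range _

lemma ncard_idxZ : (idxZ r).ncard = r - 1 := by
  rw [idxZ, Set.ncard_range_of_injective (Sum.inr_injective.comp Sum.inr_injective),
    Nat.card_eq_fintype_card, Fintype.card_fin]

lemma idxY_notMem (n : ℕ) : idxY r ∉ idxX r n ∪ idxZ r := by simp [idxY, idxX, idxZ]

lemma disjoint_idxX_idxZ (n : ℕ) : Disjoint (idxX r n) (idxZ r) := by
  simp [Set.disjoint_left, idxX, idxZ]

lemma idxX_succ (n : ℕ) : idxX r (n + 1) = insert (Sum.inl (n + 1)) (idxX r n) := by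
  rw [idxX, idxX, ← Set.image_insert_eq, Set.insert_Icc_right_eq_Icc_add_one (by lia)]

lemma kfld_eq_varField (n : ℕ) : kfld k0 r n = varField k0 (vars k0 r) (idxX r n) := by
  rw [kfld, varField, idxX, Set.image_image]
  congr 2
  ext x
  simp only [Set.mem_image, Set.mem_Icc, and_assoc, eq_comm (b := x)]
  rfl

lemma Ffld_eq_varField (n : ℕ) : Ffld k0 r n = varField k0 (vars k0 r) (idxX r n ∪ idxZ r) := by
  rw [Ffld, kfld_eq_varField, ← closure_varField_union_image, idxZ, ← Set.range_comp]
  rfl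

lemma Kfld_eq_varField (n : ℕ) :
    Kfld k0 r n = varField k0 (vars k0 r) (insert (idxY r) (idxX r n ∪ idxZ r)) := by
  rw [Kfld, Ffld_eq_varField, ← closure_varField_union_singleton]
  rfl

lemma Kfld_succ (n : ℕ) : Kfld k0 r (n + 1) =
    Subfield.closure ((Kfld k0 r n : Set (Amb k0 r)) ∪ {ambX k0 r (n + 1)}) := by
  rw [Kfld_eq_varField, Kfld_eq_varField, idxX_succ, Set.insert_union, Set.insert_comm,
    ← closure_varField_union_singleton]
  rfl

lemma kfld_mono : Monotone (kfld k0 r) := fun m n h => by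
  rw [kfld_eq_varField, kfld_eq_varField]
  exact varField_mono (Set.image_mono (Set.Icc_subset_Icc_right h))

lemma Kfld_mono : Monotone (Kfld k0 r) := monotone_nat_of_le_succ fun n x hx => by
  rw [Kfld_succ]
  exact Subfield.subset_closure (.inl hx)

lemma kfld_le_Ffld (n : ℕ) : kfld k0 r n ≤ Ffld k0 r n := fun _ hx =>
  Subfield.subset_closure (.inl hx)

lemma Ffld_le_Kfld (n : ℕ) : Ffld k0 r n ≤ Kfld k0 r n := fun _ hx =>
  Subfield.subset_closure (.inl hx)

lemma kfld_le_Kfld (n : ℕ) : kfld k0 r n ≤ Kfld k0 r n :=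
  (kfld_le_Ffld k0 r n).trans (Ffld_le_Kfld k0 r n)

lemma ambY_mem_Kfld (n : ℕ) : ambY k0 r ∈ Kfld k0 r n := Subfield.subset_closure (.inr rfl)

lemma ambY_ne_zero : ambY k0 r ≠ 0 := (algebraicIndependent_vars k0 r).ne_zero (idxY r)

lemma ambX'_eq (n : ℕ) : ambX' k0 r n = (ambY k0 r)⁻¹ + ambX k0 r n := by
  rw [ambX', add_div, one_div, mul_div_cancel_left₀ _ (ambY_ne_zero k0 r)]

lemma transcendental_ambX' (n : ℕ) : Transcendental (Kfld k0 r n) (ambX' k0 r (n + 1)) := by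
  rw [ambX'_eq]
  refine transcendental_add (inv_mem (ambY_mem_Kfld k0 r n)) ?_
  rw [Kfld_eq_varField]
  exact transcendental_varField (algebraicIndependent_vars k0 r) (by simp [idxX, idxY, idxZ])

lemma Kfld_succ_eq_closure_ambX' (n : ℕ) : Kfld k0 r (n + 1) =
    Subfield.closure ((Kfld k0 r n : Set (Amb k0 r)) ∪ {ambX' k0 r (n + 1)}) := by
  rw [ambX'_eq, closure_union_add_singleton (inv_mem (ambY_mem_Kfld k0 r n)), Kfld_succ]

lemma FfldU_eq_iSup : FfldU k0 r = ⨆ n, Ffld k0 r n := by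
  rw [FfldU, kfldU, Set.iUnion_union, Subfield.closure_iUnion]
  rfl

lemma KfldU_eq_iSup : KfldU k0 r = ⨆ n, Kfld k0 r n := by
  rw [KfldU, FfldU_eq_iSup, closure_iSup_union]
  rfl

/-- The `Y`-adic valuation of the ambient field. -/
noncomputable def valY : Valuation (Amb k0 r) ℤᵐ⁰ :=
  (exists_valuation_varField (algebraicIndependent_vars k0 r) (varField_vars_univ k0 r)
    (idxY r)).choose

lemma valY_ambY : valY k0 r (ambY k0 r) = exp (-1 : ℤ) :=
  (exists_valuation_varField (algebraicIndependent_vars k0 r) (varField_vars_univ k0 r)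
    (idxY r)).choose_spec.2

lemma valY_ambY_lt_one : valY k0 r (ambY k0 r) < 1 := by
  rw [valY_ambY, ← exp_zero, exp_lt_exp]
  simp

variable {k0 r}

lemma valY_le_one {c : Amb k0 r} (hc : c ∈ varField k0 (vars k0 r) {idxY r}ᶜ) : valY k0 r c ≤ 1 :=
  (exists_valuation_varField (algebraicIndependent_vars k0 r) (varField_vars_univ k0 r)
    (idxY r)).choose_spec.1 c hc

lemma valY_le_one_of_mem_Ffld {n : ℕ} {c : Amb k0 r} (hc : c ∈ Ffld k0 r n) : valY k0 r c ≤ 1 := by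
  rw [Ffld_eq_varField] at hc
  exact valY_le_one (varField_mono (Set.subset_compl_singleton_iff.mpr (idxY_notMem r n)) hc)

lemma valY_ambX_le_one (n : ℕ) : valY k0 r (ambX k0 r n) ≤ 1 :=
  valY_le_one (mem_varField (i := Sum.inl n) (by simp [idxY]))

lemma valY_ambX' (n : ℕ) : valY k0 r (ambX' k0 r n) = exp (1 : ℤ) := by
  have h : valY k0 r (ambY k0 r)⁻¹ = exp (1 : ℤ) := by rw [map_inv₀, valY_ambY, exp_neg, inv_inv]
  rw [ambX'_eq, Valuation.map_add_eq_of_lt_left, h]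
  rw [h]
  refine (valY_ambX_le_one n).trans_lt ?_
  rw [← exp_zero, exp_lt_exp]
  simp

lemma hasCoefficientField_Ffld (n : ℕ) :
    HasCoefficientField (valY k0 r) (Ffld k0 r n) (Kfld k0 r n) :=
  .of_closure (fun _ => valY_le_one_of_mem_Ffld) (ambY_ne_zero k0 r) (valY_ambY_lt_one k0 r)

lemma mem_KfldU {x : Amb k0 r} : x ∈ KfldU k0 r ↔ ∃ n, x ∈ Kfld k0 r n := by
  rw [KfldU_eq_iSup, Subfield.mem_iSup_of_directed (Kfld_mono k0 r).directed_le]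

lemma Ffld_mono : Monotone (Ffld k0 r) := fun _ _ h =>
  Subfield.closure_mono (Set.union_subset_union_left _ (kfld_mono k0 r h))

lemma valY_le_one_of_mem_FfldU {c : Amb k0 r} (hc : c ∈ FfldU k0 r) : valY k0 r c ≤ 1 := by
  rw [FfldU_eq_iSup, Subfield.mem_iSup_of_directed Ffld_mono.directed_le] at hc
  exact hc.elim fun _ => valY_le_one_of_mem_Ffld

lemma mem_Mset_iff {n : ℕ} {x : Amb k0 r} :
    x ∈ Mset k0 r n ↔ x ∈ Kfld k0 r n ∧ valY k0 r x < 1 := by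
  refine Iff.trans ?_ (exists_eq_mul_iff_lt_one (ambY_mem_Kfld k0 r n) (valY_ambY k0 r))
  refine exists_congr fun y => and_congr_left' ?_
  exact exists_div_iff_le_one (fun _ => valY_le_one_of_mem_Ffld) (ambY_ne_zero k0 r)
    (valY_ambY_lt_one k0 r)

lemma mem_MsetU_iff {x : Amb k0 r} : x ∈ MsetU k0 r ↔ x ∈ KfldU k0 r ∧ valY k0 r x < 1 := by
  refine Iff.trans ?_ (exists_eq_mul_iff_lt_one (Subfield.subset_closure (.inr rfl))
    (valY_ambY k0 r))
  refine exists_congr fun y => and_congr_left' ?_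
  exact exists_div_iff_le_one (fun _ => valY_le_one_of_mem_FfldU) (ambY_ne_zero k0 r)
    (valY_ambY_lt_one k0 r)

lemma Aset_eq_pullback (n : ℕ) :
    Aset k0 r n = pullback (valY k0 r) (kfld k0 r n).toSubring (Kfld k0 r n) := by
  ext x
  constructor
  · rintro ⟨c, hc, m, hm, rfl⟩
    obtain ⟨hmK, hm⟩ := mem_Mset_iff.mp hm
    exact ⟨add_mem (kfld_le_Kfld k0 r n hc) hmK, c, hc,
      valY_le_one_of_mem_Ffld (kfld_le_Ffld k0 r n hc), by rwa [add_sub_cancel_left]⟩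
  · rintro ⟨hx, c, hc, -, h⟩
    exact ⟨c, hc, x - c, mem_Mset_iff.mpr ⟨sub_mem hx (kfld_le_Kfld k0 r n hc), h⟩, by ring⟩

lemma Aset_mono : Monotone (Aset k0 r) := fun m n h => by
  rw [Aset_eq_pullback, Aset_eq_pullback]
  exact pullback_mono (kfld_mono k0 r h) (Kfld_mono k0 r h)

lemma AsetU_eq_iUnion : AsetU k0 r = ⋃ n, Aset k0 r n := by
  ext x
  simp only [Set.mem_iUnion]
  constructor
  · rintro ⟨c, hc, m, hm, rfl⟩
    obtain ⟨i, hi⟩ := Set.mem_iUnion.mp hc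
    obtain ⟨hmK, hm⟩ := mem_MsetU_iff.mp hm
    obtain ⟨j, hj⟩ := mem_KfldU.mp hmK
    exact ⟨max i j, c, kfld_mono k0 r (le_max_left i j) hi, m,
      mem_Mset_iff.mpr ⟨Kfld_mono k0 r (le_max_right i j) hj, hm⟩, rfl⟩
  · rintro ⟨n, c, hc, m, hm, rfl⟩
    obtain ⟨hmK, hm⟩ := mem_Mset_iff.mp hm
    exact ⟨c, Set.mem_iUnion_of_mem n hc, m, mem_MsetU_iff.mpr ⟨mem_KfldU.mpr ⟨n, hmK⟩, hm⟩, rfl⟩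

lemma mem_kfld_of_forall {n : ℕ} {x : Amb k0 r} (hx : x ∈ Ffld k0 r n)
    (h : ∀ W ∈ valuationOverrings (kfld k0 r n).toSubring (Ffld k0 r n), x ∈ W) :
    x ∈ kfld k0 r n := by
  refine mem_of_forall_mem_valuationOverrings (kfld_le_Ffld k0 r n) (fun y hy hy' => ?_) hx h
  rw [Ffld_eq_varField] at hy
  rw [kfld_eq_varField] at hy' ⊢
  exact mem_varField_of_isAlgebraic (algebraicIndependent_vars k0 r) (finite_idxZ r) hy hy'

lemma ringKrullDim_le_of_kfld_le (hr : 1 ≤ r) {n : ℕ} {W : Subring (Amb k0 r)}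
    (hW : W ≤ (Kfld k0 r n).toSubring) (hkW : (kfld k0 r n).toSubring ≤ W) :
    ringKrullDim W ≤ r := by
  have hs : (insert (idxY r) (idxZ r)).Finite := (finite_idxZ r).insert _
  have hK : Kfld k0 r n = Subfield.closure
      ((kfld k0 r n : Set (Amb k0 r)) ∪ vars k0 r '' insert (idxY r) (idxZ r)) := by
    rw [kfld_eq_varField, closure_varField_union_image, Kfld_eq_varField, Set.union_insert]
  have hcard : (vars k0 r '' insert (idxY r) (idxZ r)).ncard ≤ r := by
    refine (Set.ncard_image_le hs).trans ((Set.ncard_insert_le _ _).trans ?_)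
    rw [ncard_idxZ]
    lia
  exact (ringKrullDim_le_ncard (hs.image _) hkW (hK ▸ hW)).trans (mod_cast hcard)

lemma exists_valuationOverring_pullback_kfld (hr : 1 ≤ r) (n : ℕ) :
    ∃ W ∈ valuationOverrings (pullback (valY k0 r) (kfld k0 r n).toSubring (Kfld k0 r n))
      (Kfld k0 r n), r ≤ ringKrullDim W := by
  obtain ⟨W, hW, hkW, hdim⟩ := exists_ncard_le_ringKrullDim (algebraicIndependent_vars k0 r)
    (varField_vars_univ k0 r) (finite_idxZ r) (disjoint_idxX_idxZ r n)
  rw [← Ffld_eq_varField] at hW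
  rw [← kfld_eq_varField] at hkW
  rw [ncard_idxZ] at hdim
  have h := hasCoefficientField_Ffld (k0 := k0) (r := r) n
  refine ⟨_, ⟨pullback_mono hkW le_rfl, h.isValuationRingOf_pullback hW⟩, ?_⟩
  refine le_trans ?_ (h.ringKrullDim_add_one_le hW.le (ambY_mem_Kfld k0 r n) (ambY_ne_zero k0 r)
    (valY_ambY_lt_one k0 r))
  refine le_trans ?_ (add_le_add_left hdim 1)
  exact_mod_cast (Nat.sub_add_cancel hr).ge

variable (k0) in
/-- The tower of the paper, with all indices shifted by one. -/
noncomputable def tower (hr : 1 ≤ r) : Tower (Amb k0 r) r where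
  K n := Kfld k0 r (n + 1)
  k n := kfld k0 r (n + 1)
  T n := ambX' k0 r (n + 2)
  v := valY k0 r
  k_le n := kfld_le_Kfld k0 r (n + 1)
  k_succ n := kfld_mono k0 r (n + 1).le_succ
  transcendental n := transcendental_ambX' k0 r (n + 1)
  K_succ n := Kfld_succ_eq_closure_ambX' k0 r (n + 1)
  v_T n := valY_ambX' (n + 2)
  v_le_one n _ hc := valY_le_one_of_mem_Ffld (kfld_le_Ffld k0 r (n + 1) hc)
  integrallyClosed n _ hx := (hasCoefficientField_Ffld (n + 1)).mem_pullback_of_forall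
    (kfld_le_Ffld k0 r (n + 1)) (fun _ => mem_kfld_of_forall) hx
  ringKrullDim_le _ _ hW := ringKrullDim_le_of_kfld_le hr hW.le
  exists_le_ringKrullDim := exists_valuationOverring_pullback_kfld hr 1

variable (hr : 1 ≤ r)

lemma tower_A (n : ℕ) : ((tower k0 hr).A n : Set (Amb k0 r)) = Aset k0 r (n + 1) :=
  (Aset_eq_pullback (n + 1)).symm

lemma tower_AU : ((tower k0 hr).AU : Set (Amb k0 r)) = AsetU k0 r := by
  rw [AsetU_eq_iUnion, ← Set.iSup_eq_iUnion, ← Aset_mono.iSup_nat_add 1]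
  ext x
  simp only [SetLike.mem_coe, Tower.mem_AU, Set.iSup_eq_iUnion, Set.mem_iUnion, ← tower_A hr]

lemma valOverringsIn_eq (D : Subring (Amb k0 r)) (L : Subfield (Amb k0 r)) :
    valOverringsIn k0 r D L = valuationOverrings D L := by
  ext W
  exact ⟨fun h => ⟨h.1, h.2.1, h.2.2⟩, fun h => ⟨h.1, h.2.le, h.2.mem_or_inv_mem⟩⟩

lemma contentIdeal_eq_top_iff (R : Subring (Amb k0 r)) (g : R[X]) :
    g.contentIdeal = ⊤ ↔ unitContent k0 r R (g.map R.subtype) := by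
  classical
  rw [Ideal.eq_top_iff_one]
  constructor
  · intro h
    rw [contentIdeal_def, coeffs, Finset.coe_image, Ideal.span,
      Submodule.mem_span_image_finset_iff_exists_fun'] at h
    obtain ⟨u, hu⟩ := h
    refine ⟨g.support, fun i => u i, fun i _ => (u i).2, ?_⟩
    simpa using congr_arg R.subtype hu
  · rintro ⟨t, u, hu, h⟩
    have hsum : ∑ i ∈ t.attach, (⟨u i, hu i i.2⟩ : R) * g.coeff i = 1 := Subtype.ext <| by
      rw [R.coe_one, ← h, ← Finset.sum_attach t]
      simp
    exact hsum ▸ sum_mem fun i _ => Ideal.mul_mem_left _ _ (coeff_mem_contentIdeal g i)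

lemma nagataSet_eq (R : Subring (Amb k0 r)) (T : Amb k0 r) :
    nagataSet k0 r R T = nagata R T := by
  ext x
  constructor
  · rintro ⟨f, g, hf, hg, hgu, rfl⟩
    obtain ⟨f, rfl⟩ := (lifts_iff_coeff_lifts (f := R.subtype) f).mpr fun i => ⟨⟨_, hf i⟩, rfl⟩
    obtain ⟨g, rfl⟩ := (lifts_iff_coeff_lifts (f := R.subtype) g).mpr fun i => ⟨⟨_, hg i⟩, rfl⟩
    exact ⟨f, g, (contentIdeal_eq_top_iff R g).mpr hgu, by
      simp only [coe_mapRingHom, eval_map, aeval_def]; rfl⟩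
  · rintro ⟨f, g, hg, rfl⟩
    exact ⟨f.map R.subtype, g.map R.subtype, fun i => by simp, fun i => by simp,
      (contentIdeal_eq_top_iff R g).mp hg, by simp only [eval_map, aeval_def]; rfl⟩

lemma krSet_eq (D : Subring (Amb k0 r)) (L : Subfield (Amb k0 r)) (T : Amb k0 r) :
    krSet k0 r D L T = kroneckerRing D L T := by
  ext x
  simp only [krSet, valOverringsIn_eq, nagataSet_eq, Set.mem_iInter, SetLike.mem_coe,
    mem_kroneckerRing]

lemma tower_D (n : ℕ) : ((tower k0 hr).D n : Set (Amb k0 r)) = Dset k0 r (n + 1) := by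
  induction n with
  | zero => exact tower_A hr 0
  | succ n ih =>
    rw [Dset, ← ih, krSet_eq, ← tower_A hr]
    rfl

lemma tower_DU : ((tower k0 hr).DU : Set (Amb k0 r)) = DsetU k0 r := by
  ext x
  simp only [DsetU, SetLike.mem_coe, Tower.mem_DU, Set.mem_iUnion]
  constructor
  · rintro ⟨n, hn⟩
    exact ⟨n + 1, (tower_D hr n).le hn⟩
  · rintro ⟨_ | n, hn⟩
    · exact ⟨0, (tower_D hr 0).ge hn⟩
    · exact ⟨n, (tower_D hr n).ge hn⟩

lemma tower_center :
    Subtype.val '' ((tower k0 hr).center : Set (tower k0 hr).DU) = MMsetU k0 r := by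
  ext x
  simp only [MMsetU, MMset, Set.mem_iUnion, Set.mem_image, SetLike.mem_coe, Subtype.exists,
    exists_and_right, exists_eq_right, Tower.mem_center, ← tower_D hr, Set.mem_inter_iff,
    mem_Mset_iff]
  constructor
  · rintro ⟨hx, hv⟩
    obtain ⟨n, hn⟩ := (tower k0 hr).mem_DU.mp hx
    have hn' := (tower k0 hr).D_mono n.le_succ hn
    exact ⟨n, ⟨(tower k0 hr).D_le_K _ hn', hv⟩, hn'⟩
  · rintro ⟨n, ⟨-, hv⟩, hn⟩
    exact ⟨(tower k0 hr).mem_DU.mpr ⟨n + 1, hn⟩, hv⟩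

lemma locAt_eq_ofPrime (S : Subring (Amb k0 r)) (P : Ideal S) [P.IsPrime] :
    locAt k0 r S (Subtype.val '' (P : Set S)) = (LocalSubring.ofPrime S P).toSubring := by
  ext x
  rw [SetLike.mem_coe, mem_ofPrime]
  constructor
  · rintro ⟨a, ha, b, hb, hbP, rfl⟩
    exact ⟨⟨a, ha⟩, ⟨b, hb⟩, fun h => hbP ⟨_, h, rfl⟩, rfl⟩
  · rintro ⟨a, b, hbP, rfl⟩
    exact ⟨a, a.2, b, b.2, fun ⟨c, hc, h⟩ => hbP (Subtype.ext h ▸ hc), rfl⟩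

namespace Tower

variable {s : ℕ} (τ : Tower (Amb k0 r) s)

lemma qfSet_eq_KU {S : Subring (Amb k0 r)} (hS : τ.DU ≤ S) (hS' : S ≤ τ.KU.toSubring) :
    qfSet k0 r S = τ.KU := by
  ext x
  constructor
  · rintro ⟨a, ha, b, hb, -, rfl⟩
    exact div_mem (hS' ha) (hS' hb)
  · intro hx
    obtain ⟨n, -, hn⟩ := τ.exists_mem_K_succ hx 0
    obtain ⟨a, ha, b, hb, -, -, hb₀, rfl, -⟩ := τ.exists_eq_div hn
    exact ⟨a, hS (le_iSup τ.D _ ha), b, hS (le_iSup τ.D _ hb), hb₀, rfl⟩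

theorem mem_locAt_or_inv_mem_locAt {q : Ideal τ.DU} (hq : q.IsPrime)
    (hne : Subtype.val '' (q : Set τ.DU) ≠ Subtype.val '' (τ.center : Set τ.DU)) :
    ∀ x ∈ qfSet k0 r τ.DU, x ∈ locAt k0 r τ.DU (Subtype.val '' (q : Set τ.DU)) ∨
      x⁻¹ ∈ locAt k0 r τ.DU (Subtype.val '' (q : Set τ.DU)) := by
  rw [τ.qfSet_eq_KU le_rfl τ.DU_le_KU, locAt_eq_ofPrime]
  exact (τ.isValuationRingOf_ofPrime (by rintro rfl; exact hne rfl)).mem_or_inv_mem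

theorem coe_DU_eq_iInter_locAt : (τ.DU : Set (Amb k0 r)) =
    ⋂ q ∈ {q : Ideal τ.DU | q.IsPrime ∧
      Subtype.val '' (q : Set τ.DU) ≠ Subtype.val '' (τ.center : Set τ.DU)},
      locAt k0 r τ.DU (Subtype.val '' (q : Set τ.DU)) := by
  refine Set.Subset.antisymm (fun x hx => Set.mem_iInter₂.mpr fun q ⟨hq, _⟩ => ?_) fun x hx => ?_
  · rw [locAt_eq_ofPrime]
    exact LocalSubring.le_ofPrime τ.DU q hx
  · refine τ.mem_DU_of_forall_mem_ofPrime fun Q hQ hne => ?_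
    have := Set.mem_iInter₂.mp hx Q ⟨hQ, fun h => hne <| SetLike.coe_injective <|
      Subtype.val_injective.image_injective h⟩
    rwa [locAt_eq_ofPrime] at this

theorem isEssentialSub_DU : IsEssentialSub k0 r τ.DU :=
  ⟨_, fun _ hq => hq.1, fun _ hq => τ.mem_locAt_or_inv_mem_locAt hq.1 hq.2,
    τ.coe_DU_eq_iInter_locAt⟩

theorem subValuativeDim_DU : subValuativeDim k0 r τ.DU = s := by
  have hqf := τ.qfSet_eq_KU le_rfl τ.DU_le_KU
  rw [subValuativeDim, hqf]
  refine le_antisymm (iSup_le fun W => ?_) ?_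
  · exact τ.ringKrullDim_le_of_mem_valuationOverrings_DU ⟨W.2.1, W.2.2.1, W.2.2.2⟩
  · obtain ⟨W, hW, hs, -⟩ := τ.exists_valuationOverring_le_ringKrullDim
    exact le_iSup_of_le ⟨W, hW.1, hW.2.le, hW.2.mem_or_inv_mem⟩ hs

-- The zero ideal is the only prime of `A` whose localization is a valuation ring.
theorem not_isEssentialSub_AU {z : Amb k0 r} (hz : z ∈ τ.KU) (hzA : z ∉ τ.AU)
    (hzA' : z⁻¹ ∉ τ.AU) : ¬ IsEssentialSub k0 r τ.AU := by
  rintro ⟨Δ, hprime, hval, hΔ⟩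
  refine τ.T_notMem_AU 0 (hΔ.ge (Set.mem_iInter₂.mpr fun P hP => ?_))
  have := hprime P hP
  have hPval := hval P hP
  rw [τ.qfSet_eq_KU τ.DU_le_AU τ.AU_le_KU, locAt_eq_ofPrime] at hPval
  rw [locAt_eq_ofPrime]
  obtain rfl := τ.eq_bot_of_isValuationRingOf_ofPrime hz hzA hzA' ⟨ofPrime_le τ.AU_le_KU P, hPval⟩
  exact τ.T_mem_ofPrime_bot 0

end Tower

lemma ambZ_notMem_kfld (i : Fin (r - 1)) (n : ℕ) : ambZ k0 r i ∉ kfld k0 r n := by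
  rw [kfld_eq_varField]
  have hi : Sum.inr (Sum.inr i) ∉ idxX r n := by simp [idxX]
  exact notMem_varField (algebraicIndependent_vars k0 r) hi

lemma exists_mem_kfld_of_mem_AU {z : Amb k0 r} (hz : ∀ n, z ∈ Ffld k0 r n)
    (h : z ∈ (tower k0 hr).AU) : ∃ n, z ∈ kfld k0 r n := by
  obtain ⟨n, hn⟩ := (tower k0 hr).mem_AU.mp h
  exact ⟨n + 1, mem_of_mem_pullback (fun _ => valY_le_one_of_mem_Ffld)
    (kfld_le_Ffld k0 r (n + 1)) (hz _) hn⟩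

theorem not_isEssentialSub_tower_AU (i : Fin (r - 1)) :
    ¬ IsEssentialSub k0 r (tower k0 hr).AU := by
  have hF (n : ℕ) : ambZ k0 r i ∈ Ffld k0 r n := Subfield.subset_closure (.inr ⟨i, rfl⟩)
  refine (tower k0 hr).not_isEssentialSub_AU (z := ambZ k0 r i)
    ((tower k0 hr).mem_KU.mpr ⟨0, Ffld_le_Kfld k0 r 1 (hF 1)⟩) (fun h => ?_) (fun h => ?_)
  · obtain ⟨n, hn⟩ := exists_mem_kfld_of_mem_AU hr hF h
    exact ambZ_notMem_kfld i n hn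
  · obtain ⟨n, hn⟩ := exists_mem_kfld_of_mem_AU hr (fun n => inv_mem (hF n)) h
    exact ambZ_notMem_kfld i n (inv_inv (ambZ k0 r i) ▸ inv_mem hn)

end Concrete

end FontanaKabbaj

/-- In the tower construction with `D := ⋃_{n ≥ 1} Dₙ` and
`𝓜 := ⋃_{n ≥ 2} 𝓜ₙ`: one has `D = ⋂ {D_q : q ∈ Spec(D), q ≠ 𝓜}` inside the quotient
field; consequently `D` is an essential domain (each such `D_q` being a valuation
domain), while its localization `D_𝓜 = A` is not essential, and
`dim(D) = dim_v(D) = r`. -/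
theorem tower_D_essential_jaffard_not_locally_essential
    (k0 : Type) [Field k0] (r : ℕ) (hr : 2 ≤ r) :
    (∀ D' : Subring (Amb k0 r), (D' : Set (Amb k0 r)) = DsetU k0 r →
      (DsetU k0 r =
        ⋂ q ∈ {q : Ideal ↥D' | q.IsPrime ∧ Subtype.val '' (q : Set ↥D') ≠ MMsetU k0 r},
          locAt k0 r (DsetU k0 r) (Subtype.val '' (q : Set ↥D'))) ∧
      (∀ q : Ideal ↥D', q.IsPrime → Subtype.val '' (q : Set ↥D') ≠ MMsetU k0 r →
        ∀ x ∈ qfSet k0 r (DsetU k0 r),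
          x ∈ locAt k0 r (DsetU k0 r) (Subtype.val '' (q : Set ↥D')) ∨
          x⁻¹ ∈ locAt k0 r (DsetU k0 r) (Subtype.val '' (q : Set ↥D'))) ∧
      IsEssentialSub k0 r D' ∧
      ringKrullDim ↥D' = (r : WithBot ℕ∞) ∧
      subValuativeDim k0 r D' = (r : WithBot ℕ∞)) ∧
    locAt k0 r (DsetU k0 r) (MMsetU k0 r) = AsetU k0 r ∧
    (∀ A' : Subring (Amb k0 r), (A' : Set (Amb k0 r)) = AsetU k0 r →
      ¬ IsEssentialSub k0 r A') := by
  have hr₁ : 1 ≤ r := one_le_two.trans hr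
  let τ := FontanaKabbaj.tower k0 hr₁
  rw [← FontanaKabbaj.tower_DU hr₁, ← FontanaKabbaj.tower_AU hr₁, ← FontanaKabbaj.tower_center hr₁]
  refine ⟨fun D' hD' => ?_, ?_, fun A' hA' => ?_⟩
  · obtain rfl : D' = τ.DU := SetLike.coe_injective hD'
    exact ⟨τ.coe_DU_eq_iInter_locAt, fun _ => τ.mem_locAt_or_inv_mem_locAt, τ.isEssentialSub_DU,
      τ.ringKrullDim_DU hr₁, τ.subValuativeDim_DU⟩
  · rw [FontanaKabbaj.locAt_eq_ofPrime, FontanaKabbaj.Tower.ofPrime_center]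
  · obtain rfl : A' = τ.AU := SetLike.coe_injective hA'
    exact FontanaKabbaj.not_isEssentialSub_tower_AU hr₁ ⟨0, by lia⟩
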